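/- arXiv:1911.10067 — 6 statements merged into one kernel-verified Lean document; each statement's English description precedes it below -/
import Mathlib

section
/- Let Ξ > 0, let b ≠ 0, λ₂, K be real numbers, and let v : ℝ → ℝ be a continuous Ξ-periodic non-constant function with v > 0 everywhere; set u := K − λ₂/v. Writing ⟨·⟩ for the mean value (1/Ξ)∫₀^Ξ, one has ⟨v⟩ · ⟨1/v⟩ > 1 and ⟨v u⟩/b − ⟨v⟩⟨u⟩/b = (λ₂/b)(⟨v⟩⟨1/v⟩ − 1); in particular this quantity is strictly positive if λ₂/b > 0, strictly negative if λ₂/b < 0, and zero if λ₂ = 0. -/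
/-!
Over a probability measure with mean `m = ⟨v⟩`, the square `(v - m)² / v = v - 2 m + m² / v` is
nonnegative and integrates to `m (⟨v⟩⟨1/v⟩ - 1)`, which is therefore positive unless `v` is almost
everywhere constant. Since `v u = K v - l` is affine in `v` and `u = K - l / v` is affine in
`1 / v`, the constant `K` cancels from `⟨v u⟩ - ⟨v⟩⟨u⟩`, leaving `l (⟨v⟩⟨1/v⟩ - 1)`. The mean over
a period is the integral against the uniform probability measure on `(0, Ξ]`, for which a
continuous `Ξ`-periodic function that is almost everywhere constant is constant.
-/

open MeasureTheory ProbabilityTheory Set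

theorem sub_sq_div_self {F : Type*} [Field F] {x : F} (hx : x ≠ 0) (m : F) :
    (x - m) ^ 2 / x = x - 2 * m + m ^ 2 * (1 / x) := by
  field_simp
  ring

section MeanReciprocal

variable {α : Type*} {mα : MeasurableSpace α} {μ : Measure α} {v : α → ℝ}

section FiniteMeasure

variable [IsFiniteMeasure μ]

theorem integrable_sub_sq_div_self (hv : Integrable v μ) (hinv : Integrable (fun x => 1 / v x) μ)
    (hne : ∀ᵐ x ∂μ, v x ≠ 0) (m : ℝ) : Integrable (fun x => (v x - m) ^ 2 / v x) μ :=
  ((hv.sub (integrable_const _)).add (hinv.const_mul _)).congr <|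
    hne.mono fun _ hx => (sub_sq_div_self hx m).symm

theorem integral_sub_sq_div_self_pos (hv : Integrable v μ)
    (hinv : Integrable (fun x => 1 / v x) μ) (hpos : ∀ᵐ x ∂μ, 0 < v x) {m : ℝ}
    (hm : ¬ ∀ᵐ x ∂μ, v x = m) : 0 < ∫ x, (v x - m) ^ 2 / v x ∂μ := by
  have hne : ∀ᵐ x ∂μ, v x ≠ 0 := hpos.mono fun _ hx => hx.ne'
  have hnonneg : 0 ≤ᵐ[μ] fun x => (v x - m) ^ 2 / v x :=
    hpos.mono fun _ hx => div_nonneg (sq_nonneg _) hx.le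
  refine (integral_nonneg_of_ae hnonneg).lt_of_ne' fun hzero => hm ?_
  rw [integral_eq_zero_iff_of_nonneg_ae hnonneg (integrable_sub_sq_div_self hv hinv hne m)] at hzero
  filter_upwards [hzero, hne] with x hx hx0
  have hsq : (v x - m) ^ 2 = 0 := (div_eq_zero_iff.1 hx).resolve_right hx0
  exact sub_eq_zero.1 (pow_eq_zero_iff two_ne_zero |>.1 hsq)

end FiniteMeasure

section ProbabilityMeasure

variable [IsProbabilityMeasure μ]

theorem integral_sub_sq_div_self (hv : Integrable v μ) (hinv : Integrable (fun x => 1 / v x) μ)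
    (hne : ∀ᵐ x ∂μ, v x ≠ 0) (m : ℝ) :
    ∫ x, (v x - m) ^ 2 / v x ∂μ = ∫ x, v x ∂μ - 2 * m + m ^ 2 * ∫ x, 1 / v x ∂μ := by
  rw [integral_congr_ae (hne.mono fun _ hx => sub_sq_div_self hx m),
    integral_add (f := fun x => v x - 2 * m) (hv.sub (integrable_const _)) (hinv.const_mul _),
    integral_sub hv (integrable_const _), integral_const, integral_const_mul, probReal_univ,
    one_smul]

theorem one_lt_integral_mul_integral_one_div (hv : Integrable v μ)
    (hinv : Integrable (fun x => 1 / v x) μ) (hpos : ∀ᵐ x ∂μ, 0 < v x)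
    (hnc : ¬ ∃ a, ∀ᵐ x ∂μ, v x = a) : 1 < (∫ x, v x ∂μ) * ∫ x, 1 / v x ∂μ := by
  set m := ∫ x, v x ∂μ
  have hm_nonneg : 0 ≤ m := integral_nonneg_of_ae (hpos.mono fun _ hx => hx.le)
  have hsq : 0 < m * (m * (∫ x, 1 / v x ∂μ) - 1) := by
    calc 0 < ∫ x, (v x - m) ^ 2 / v x ∂μ :=
          integral_sub_sq_div_self_pos hv hinv hpos fun h => hnc ⟨m, h⟩
      _ = m - 2 * m + m ^ 2 * ∫ x, 1 / v x ∂μ :=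
          integral_sub_sq_div_self hv hinv (hpos.mono fun _ hx => hx.ne') m
      _ = m * (m * (∫ x, 1 / v x ∂μ) - 1) := by ring
  exact sub_pos.1 (pos_of_mul_pos_right hsq hm_nonneg)

theorem integral_const_sub_div (hinv : Integrable (fun x => 1 / v x) μ) (K l : ℝ) :
    ∫ x, (K - l / v x) ∂μ = K - l * ∫ x, 1 / v x ∂μ := by
  simp only [div_eq_mul_one_div l]
  rw [integral_sub (integrable_const _) (hinv.const_mul _), integral_const_mul, integral_const,
    probReal_univ, one_smul]

theorem integral_mul_const_sub_div (hv : Integrable v μ) (hne : ∀ᵐ x ∂μ, v x ≠ 0) (K l : ℝ) :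
    ∫ x, v x * (K - l / v x) ∂μ = K * ∫ x, v x ∂μ - l := by
  have hmul : ∀ᵐ x ∂μ, v x * (K - l / v x) = K * v x - l := hne.mono fun x hx => by
    rw [mul_sub, mul_div_cancel₀ _ hx, mul_comm]
  rw [integral_congr_ae hmul, integral_sub (hv.const_mul _) (integrable_const _),
    integral_const_mul, integral_const, probReal_univ, one_smul]

theorem integral_mul_const_sub_div_sub_integral_mul_integral (hv : Integrable v μ)
    (hinv : Integrable (fun x => 1 / v x) μ) (hne : ∀ᵐ x ∂μ, v x ≠ 0) (K l : ℝ) :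
    ∫ x, v x * (K - l / v x) ∂μ - (∫ x, v x ∂μ) * ∫ x, (K - l / v x) ∂μ
      = l * ((∫ x, v x ∂μ) * (∫ x, 1 / v x ∂μ) - 1) := by
  rw [integral_mul_const_sub_div hv hne, integral_const_sub_div hinv]
  ring

theorem stmt2_general {b : ℝ} (hb : b ≠ 0) (l K : ℝ) (hv : Integrable v μ)
    (hinv : Integrable (fun x => 1 / v x) μ) (hpos : ∀ᵐ x ∂μ, 0 < v x)
    (hnc : ¬ ∃ a, ∀ᵐ x ∂μ, v x = a) :
    let u : α → ℝ := fun x => K - l / v x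
    let δ : ℝ := (∫ x, v x * u x ∂μ) / b - (∫ x, v x ∂μ) * (∫ x, u x ∂μ) / b
    1 < (∫ x, v x ∂μ) * ∫ x, 1 / v x ∂μ ∧
    δ = l / b * ((∫ x, v x ∂μ) * (∫ x, 1 / v x ∂μ) - 1) ∧
    (0 < δ ↔ 0 < l / b) ∧ (δ < 0 ↔ l / b < 0) ∧ (δ = 0 ↔ l = 0) := by
  intro u δ
  have hgt := one_lt_integral_mul_integral_one_div hv hinv hpos hnc
  have hδ : δ = l / b * ((∫ x, v x ∂μ) * (∫ x, 1 / v x ∂μ) - 1) := by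
    rw [div_mul_eq_mul_div, ← integral_mul_const_sub_div_sub_integral_mul_integral hv hinv
      (hpos.mono fun _ hx => hx.ne') K l, sub_div]
  have hpos_sub := sub_pos.2 hgt
  refine ⟨hgt, hδ, ?_, ?_, ?_⟩ <;> rw [hδ]
  · exact mul_pos_iff_of_pos_right hpos_sub
  · rw [← not_le, mul_nonneg_iff_of_pos_right hpos_sub, not_le]
  · rw [mul_eq_zero_iff_right hpos_sub.ne', div_eq_zero_iff, or_iff_left hb]

end ProbabilityMeasure

end MeanReciprocal

section UniformMeasure

theorem isProbabilityMeasure_cond_Ioc {a b : ℝ} (hab : a < b) :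
    IsProbabilityMeasure (volume[|Ioc a b]) :=
  cond_isProbabilityMeasure_of_finite (by simpa using hab) measure_Ioc_lt_top.ne

theorem integral_cond_Ioc {E : Type*} [NormedAddCommGroup E] [NormedSpace ℝ E] {a b : ℝ}
    (hab : a ≤ b) (f : ℝ → E) :
    ∫ x, f x ∂(volume[|Ioc a b]) = (1 / (b - a)) • ∫ x in a..b, f x := by
  rw [one_div, ← interval_average_eq, uIoc_of_le hab, setAverage_eq', ProbabilityTheory.cond]

theorem integrable_cond_Ioc {E : Type*} [NormedAddCommGroup E] {f : ℝ → E}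
    (hf : Continuous f) {a b : ℝ} (hab : a < b) : Integrable f (volume[|Ioc a b]) :=
  hf.integrableOn_Ioc.smul_measure (by simpa using hab)

theorem eq_const_of_periodic_of_ae_cond_Ioc {E : Type*} [TopologicalSpace E] [T2Space E]
    {f : ℝ → E} (hf : Continuous f) {a T : ℝ} (hT : 0 < T) (hper : Function.Periodic f T) {c : E}
    (hc : ∀ᵐ x ∂(volume[|Ioc a (a + T)]), f x = c) (x : ℝ) : f x = c := by
  have hrestrict : f =ᵐ[volume.restrict (Ioc a (a + T))] fun _ => c :=
    (Measure.absolutelyContinuous_smul (by simp)).ae_le hc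
  obtain ⟨y, hy, hxy⟩ := hper.exists_mem_Ioc hT x a
  exact hxy.trans
    (Measure.eqOn_Ioc_of_ae_eq volume hrestrict hf.continuousOn continuousOn_const hy)

end UniformMeasure

/-- Eulerian Euler–Korteweg case (`N = 2`, `τ = Id`): with
`u = K − l₂/v` along a positive, non-constant periodic profile `v`, one has
`⟨v⟩⟨1/v⟩ > 1` and `⟨v u⟩/b − ⟨v⟩⟨u⟩/b = (l₂/b)(⟨v⟩⟨1/v⟩ − 1)`, whose sign is
that of `l₂/b`. -/
theorem stmt2 (Ξ b l₂ K : ℝ) (hΞ : 0 < Ξ) (hb : b ≠ 0) (v : ℝ → ℝ)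
    (hcont : Continuous v) (hper : Function.Periodic v Ξ)
    (hpos : ∀ x : ℝ, 0 < v x) (hnc : ¬ ∃ a : ℝ, ∀ x : ℝ, v x = a) :
    let u : ℝ → ℝ := fun x => K - l₂ / v x
    let mean : (ℝ → ℝ) → ℝ := fun f => (1 / Ξ) * ∫ ξ in (0:ℝ)..Ξ, f ξ
    1 < mean v * mean (fun x => 1 / v x) ∧
    mean (fun x => v x * u x) / b - mean v * mean u / b
      = (l₂ / b) * (mean v * mean (fun x => 1 / v x) - 1) ∧
    (0 < l₂ / b → 0 < mean (fun x => v x * u x) / b - mean v * mean u / b) ∧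
    (l₂ / b < 0 → mean (fun x => v x * u x) / b - mean v * mean u / b < 0) ∧
    (l₂ = 0 → mean (fun x => v x * u x) / b - mean v * mean u / b = 0) := by
  intro u mean
  have hmean (f : ℝ → ℝ) : mean f = ∫ x, f x ∂(volume[|Ioc 0 Ξ]) := by
    rw [integral_cond_Ioc hΞ.le, sub_zero, smul_eq_mul]
  have := isProbabilityMeasure_cond_Ioc hΞ
  have hinv : Continuous fun x => 1 / v x := continuous_const.div hcont fun x => (hpos x).ne'
  have hnc_ae : ¬ ∃ a, ∀ᵐ x ∂(volume[|Ioc 0 Ξ]), v x = a := fun ⟨a, ha⟩ =>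
    hnc ⟨a, eq_const_of_periodic_of_ae_cond_Ioc hcont hΞ hper (by rwa [zero_add])⟩
  obtain ⟨hgt, hδ, hδ_pos, hδ_neg, hδ_zero⟩ :=
    stmt2_general hb l₂ K (integrable_cond_Ioc hcont hΞ) (integrable_cond_Ioc hinv hΞ)
      (ae_of_all _ hpos) hnc_ae
  simp only [hmean]
  exact ⟨hgt, hδ, hδ_pos.2, hδ_neg.2, hδ_zero.2⟩
end

section
/- Let b ≠ 0 and let f, κ : ℝ → ℝ be smooth with κ > 0 everywhere. For real (c, λ) set W(v; c, λ) := −f(v) − (c/(2b)) v² − λ v. Let Ω ⊆ ℝ³ be open with coordinates (μ, c, λ), and suppose given a smooth function v̲ : Ω × ℝ → ℝ and a smooth function Ξ : Ω → (0, ∞) such that for each (μ, c, λ) ∈ Ω the function ξ ↦ v̲(μ, c, λ; ξ) is non-constant, periodic with least period Ξ(μ, c, λ), and satisfies the profile equation κ(v̲) v̲'' + (1/2) κ'(v̲)(v̲')² + ∂_v W(v̲; c, λ) = 0 together with the first integral (1/2) κ(v̲)(v̲')² + W(v̲; c, λ) = μ. Then the abbreviated action Θ(μ, c, λ) := ∫₀^{Ξ(μ,c,λ)}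 ( (1/2) κ(v̲)(v̲')² + f(v̲) + (c/(2b)) v̲² + λ v̲ + μ ) dξ is smooth on Ω, with ∂_μΘ = Ξ, ∂_cΘ = ∫₀^{Ξ} v̲²/(2b) dξ, and ∂_λΘ = ∫₀^{Ξ} v̲ dξ. -/
/-!
The integrand of the abbreviated action is the Lagrangian of the profile equation, so each profile
is an extremal of it. Differentiating the action of a family of extremals along a direction `e` in
parameter space and integrating by parts leaves the integral of the explicit parameter derivative
of the Lagrangian and boundary terms. Periodicity, differentiated as `V p (T p) = V p 0`, gives
`∂_e V (T) + (T' e) V' = ∂_e V (0)`, and the boundary terms, including the one produced by the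
moving endpoint, add up to `-(energy) (T' e)`. The additive constant `μ` in the Lagrangian makes
the energy vanish: this is the first integral. Hence only the explicit derivatives `1`, `v² / (2b)`
and `v` with respect to `μ`, `c` and `λ` survive.
-/

open Set Filter Topology Function

section Continuity

variable {X : Type*} [TopologicalSpace X] {Ω : Set X} {x : X}

theorem continuous_section {Y Z : Type*} [TopologicalSpace Y] [TopologicalSpace Z] {h : X × Y → Z}
    (hh : ContinuousOn h (Ω ×ˢ univ)) (hx : x ∈ Ω) : Continuous fun y => h (x, y) :=
  hh.comp_continuous (by fun_prop) fun y => ⟨hx, mem_univ y⟩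

theorem exists_eventually_forall_norm_le {Y G : Type*} [TopologicalSpace Y]
    [SeminormedAddCommGroup G] {h : X × Y → G} {K : Set Y} (hΩ : IsOpen Ω) (hK : IsCompact K)
    (hh : ContinuousOn h (Ω ×ˢ univ)) (hx : x ∈ Ω) :
    ∃ C, ∀ᶠ y in 𝓝 x, ∀ s ∈ K, ‖h (y, s)‖ ≤ C := by
  have hcont : ∀ s, ContinuousAt h (x, s) := fun s =>
    hh.continuousAt ((hΩ.prod isOpen_univ).mem_nhds ⟨hx, mem_univ s⟩)
  obtain ⟨C, hC⟩ := hK.exists_bound_of_continuousOn (f := fun s => h (x, s))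
    (fun s _ => ((hcont s).comp (by fun_prop)).continuousWithinAt)
  refine ⟨C + 1, hK.eventually_forall_of_forall_eventually fun s hs => ?_⟩
  have hlt : ‖h (x, s)‖ < C + 1 := (hC s hs).trans_lt (lt_add_one C)
  exact ((hcont s).norm.eventually_lt_const hlt).mono fun _ => le_of_lt

theorem continuousOn_intervalIntegral {G : Type*} [NormedAddCommGroup G] [NormedSpace ℝ G]
    {h : X × ℝ → G} (hh : ContinuousOn h (Ω ×ˢ univ)) (a b : ℝ) :
    ContinuousOn (fun x => ∫ ξ in a..b, h (x, ξ)) Ω := by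
  rw [continuousOn_iff_continuous_domRestrict]
  exact intervalIntegral.continuous_parametric_intervalIntegral_of_continuous'
    (f := fun (x : Ω) ξ => h (x, ξ))
    (hh.comp_continuous (by fun_prop) fun q => ⟨q.1.2, mem_univ q.2⟩) a b

end Continuity

section ParametricIntegral

variable {E : Type*} [NormedAddCommGroup E] [NormedSpace ℝ E]
  {G : Type*} [NormedAddCommGroup G] [NormedSpace ℝ G]
  {Ω : Set E} {g : E × ℝ → G} {p : E}

theorem hasFDerivAt_of_contDiffOn_prod_univ (hΩ : IsOpen Ω) (hg : ContDiffOn ℝ 1 g (Ω ×ˢ univ))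
    (hp : p ∈ Ω) (ξ : ℝ) : HasFDerivAt g (fderiv ℝ g (p, ξ)) (p, ξ) :=
  ((hg.contDiffAt ((hΩ.prod isOpen_univ).mem_nhds ⟨hp, mem_univ ξ⟩)).differentiableAt
    one_ne_zero).hasFDerivAt

theorem hasDerivAt_section (hΩ : IsOpen Ω) (hg : ContDiffOn ℝ 1 g (Ω ×ˢ univ)) (hp : p ∈ Ω)
    (ξ : ℝ) : HasDerivAt (fun ξ => g (p, ξ)) (fderiv ℝ g (p, ξ) (0, 1)) ξ :=
  (hasFDerivAt_of_contDiffOn_prod_univ hΩ hg hp ξ).comp_hasDerivAt ξ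
    ((hasDerivAt_const ξ p).prodMk (hasDerivAt_id ξ))

theorem contDiffOn_fderiv_comp_inl {m n : WithTop ℕ∞} (hΩ : IsOpen Ω)
    (hg : ContDiffOn ℝ n g (Ω ×ˢ univ)) (hmn : m + 1 ≤ n) :
    ContDiffOn ℝ m (fun q => (fderiv ℝ g q).comp (.inl ℝ E ℝ)) (Ω ×ˢ univ) :=
  (hg.fderiv_of_isOpen (hΩ.prod isOpen_univ) hmn).clm_comp contDiffOn_const

theorem continuous_fderiv_comp_inl (hΩ : IsOpen Ω) (hg : ContDiffOn ℝ 1 g (Ω ×ˢ univ))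
    (hp : p ∈ Ω) : Continuous fun ξ => (fderiv ℝ g (p, ξ)).comp (.inl ℝ E ℝ) :=
  continuous_section (contDiffOn_fderiv_comp_inl (m := 0) hΩ hg (by simp)).continuousOn hp

theorem hasFDerivAt_intervalIntegral (hΩ : IsOpen Ω) (hg : ContDiffOn ℝ 1 g (Ω ×ˢ univ))
    (hp : p ∈ Ω) (a b : ℝ) :
    HasFDerivAt (fun q => ∫ ξ in a..b, g (q, ξ))
      (∫ ξ in a..b, (fderiv ℝ g (p, ξ)).comp (.inl ℝ E ℝ)) p := by
  obtain ⟨C, hC⟩ := exists_eventually_forall_norm_le hΩ isCompact_uIcc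
    (contDiffOn_fderiv_comp_inl (m := 0) hΩ hg (by simp)).continuousOn hp (K := uIcc a b)
  refine intervalIntegral.hasFDerivAt_integral_of_dominated_of_fderiv_le
    (F := fun q ξ => g (q, ξ)) (F' := fun q ξ => (fderiv ℝ g (q, ξ)).comp (.inl ℝ E ℝ))
    (bound := fun _ => C) (hC.and (hΩ.mem_nhds hp)) ?_
    ((continuous_section hg.continuousOn hp).intervalIntegrable a b)
    (continuous_fderiv_comp_inl hΩ hg hp).aestronglyMeasurable ?_ intervalIntegrable_const ?_
  · filter_upwards [hΩ.mem_nhds hp] with q hq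
    exact (continuous_section hg.continuousOn hq).aestronglyMeasurable
  · exact .of_forall fun ξ hξ q hq => hq.1 ξ (uIoc_subset_uIcc hξ)
  · exact .of_forall fun ξ _ q hq =>
      (hasFDerivAt_of_contDiffOn_prod_univ hΩ hg hq.2 ξ).comp q (hasFDerivAt_prodMk_left q ξ)

end ParametricIntegral

section ContDiffParametricIntegral

universe u v

variable {E : Type u} [NormedAddCommGroup E] [NormedSpace ℝ E] {Ω : Set E}

-- The induction passes from `g` to its parameter derivative, with values in `E →L[ℝ] G`: the
-- universe `max u v` is stable under this step, and `ULift` then reaches every `G`.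
theorem contDiffOn_intervalIntegral_nat (hΩ : IsOpen Ω) (a b : ℝ) (n : ℕ)
    {G : Type max u v} [NormedAddCommGroup G] [NormedSpace ℝ G] {g : E × ℝ → G}
    (hg : ContDiffOn ℝ n g (Ω ×ˢ univ)) :
    ContDiffOn ℝ n (fun q => ∫ ξ in a..b, g (q, ξ)) Ω := by
  induction n generalizing G with
  | zero =>
    rw [Nat.cast_zero, contDiffOn_zero] at hg ⊢
    exact continuousOn_intervalIntegral hg a b
  | succ n ih =>
    push_cast at hg ⊢
    have hderiv := fun q (hq : q ∈ Ω) =>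
      hasFDerivAt_intervalIntegral hΩ (hg.of_le le_add_self) hq a b
    rw [contDiffOn_succ_iff_fderiv_of_isOpen hΩ]
    refine ⟨fun q hq => (hderiv q hq).differentiableAt.differentiableWithinAt, by simp, ?_⟩
    exact (ih (contDiffOn_fderiv_comp_inl hΩ hg le_rfl)).congr fun q hq => (hderiv q hq).fderiv

theorem contDiffOn_intervalIntegral {G : Type v} [NormedAddCommGroup G] [NormedSpace ℝ G]
    {g : E × ℝ → G} {n : ℕ∞} (hΩ : IsOpen Ω) (hg : ContDiffOn ℝ n g (Ω ×ˢ univ)) (a b : ℝ) :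
    ContDiffOn ℝ n (fun q => ∫ ξ in a..b, g (q, ξ)) Ω := by
  let e : ULift.{u} G ≃L[ℝ] G := ContinuousLinearEquiv.ulift
  refine contDiffOn_iff_forall_nat_le.2 fun m hm => ?_
  have hlift : ContDiffOn ℝ m (fun q => e.symm (g q)) (Ω ×ˢ univ) :=
    e.symm.contDiff.comp_contDiffOn (hg.of_le (mod_cast hm))
  refine (e.contDiff.comp_contDiffOn
    (contDiffOn_intervalIntegral_nat hΩ a b m hlift)).congr fun q _ => ?_
  simp only [comp_apply, intervalIntegral, map_sub, ← e.integral_comp_comm,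
    e.apply_symm_apply]

end ContDiffParametricIntegral

section MovingEndpoint

variable {E : Type*} [NormedAddCommGroup E] [NormedSpace ℝ E]
  {G : Type*} [NormedAddCommGroup G] [NormedSpace ℝ G]
  {Ω : Set E} {g : E × ℝ → G} {T : E → ℝ} {p : E} {n : ℕ∞}

theorem contDiffOn_parametric_primitive (hΩ : IsOpen Ω) (hg : ContDiffOn ℝ n g (Ω ×ˢ univ))
    (a : ℝ) : ContDiffOn ℝ n (fun q : E × ℝ => ∫ ξ in a..q.2, g (q.1, ξ)) (Ω ×ˢ univ) := by
  have hscale : ContDiffOn ℝ n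
      (fun r : (E × ℝ) × ℝ => g (r.1.1, (r.1.2 - a) * r.2 + a)) ((Ω ×ˢ univ) ×ˢ univ) :=
    hg.comp (by fun_prop) fun r hr => ⟨hr.1.1, mem_univ _⟩
  have hint := contDiffOn_intervalIntegral (hΩ.prod isOpen_univ) hscale 0 1
  refine (ContDiffOn.smul (f := fun q : E × ℝ => q.2 - a) (by fun_prop) hint).congr fun q _ => ?_
  simp [intervalIntegral.smul_integral_comp_mul_add (fun ξ => g (q.1, ξ))]

theorem contDiffOn_intervalIntegral_right (hΩ : IsOpen Ω)
    (hg : ContDiffOn ℝ n g (Ω ×ˢ univ)) (hT : ContDiffOn ℝ n T Ω) (a : ℝ) :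
    ContDiffOn ℝ n (fun q => ∫ ξ in a..T q, g (q, ξ)) Ω :=
  (contDiffOn_parametric_primitive hΩ hg a).comp (contDiffOn_id.prodMk hT)
    fun _ hq => ⟨hq, mem_univ _⟩

theorem hasFDerivAt_parametric_primitive [CompleteSpace G] (hΩ : IsOpen Ω)
    (hg : ContDiffOn ℝ 1 g (Ω ×ˢ univ)) (hp : p ∈ Ω) (a t : ℝ) :
    HasFDerivAt (fun q : E × ℝ => ∫ ξ in a..q.2, g (q.1, ξ))
      ((∫ ξ in a..t, (fderiv ℝ g (p, ξ)).comp (.inl ℝ E ℝ)).coprod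
        (.toSpanSingleton ℝ (g (p, t)))) (p, t) := by
  have hjoint := hasFDerivAt_of_contDiffOn_prod_univ hΩ
    (contDiffOn_parametric_primitive (n := 1) hΩ hg a) hp t
  have hparam := (hasFDerivAt_intervalIntegral hΩ hg hp a t).unique
    (hjoint.comp (f := fun q => (q, t)) p (hasFDerivAt_prodMk_left p t))
  have hend := ((continuous_section hg.continuousOn hp).integral_hasStrictDerivAt a
    t).hasDerivAt.hasFDerivAt.unique (hjoint.comp t (hasFDerivAt_prodMk_right p t))
  rw [hparam, hend, ContinuousLinearMap.coprod_comp_inl_inr]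
  exact hjoint

theorem hasFDerivAt_intervalIntegral_right [CompleteSpace G] {T' : E →L[ℝ] ℝ} (hΩ : IsOpen Ω)
    (hg : ContDiffOn ℝ 1 g (Ω ×ˢ univ)) (hT : HasFDerivAt T T' p) (hp : p ∈ Ω) (a : ℝ) :
    HasFDerivAt (fun q => ∫ ξ in a..T q, g (q, ξ))
      ((∫ ξ in a..T p, (fderiv ℝ g (p, ξ)).comp (.inl ℝ E ℝ)) + T'.smulRight (g (p, T p))) p := by
  refine ((hasFDerivAt_parametric_primitive hΩ hg hp a (T p)).comp p
    ((hasFDerivAt_id p).prodMk hT)).congr_fderiv ?_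
  ext e
  simp

end MovingEndpoint

section ActionOfFamily

variable {E : Type*} [NormedAddCommGroup E] [NormedSpace ℝ E]
  {F : Type*} [NormedAddCommGroup F] [NormedSpace ℝ F]
  {Ω : Set E} {V : E → ℝ → F} {T : E → ℝ} {p : E}

/-- A Lagrangian `L` depending on a parameter, a position and a velocity, evaluated along the
family of curves `V`, as a function of the parameter and the time. -/
noncomputable def lagrangianAlong (L : E × F × F → ℝ) (V : E → ℝ → F) (q : E × ℝ) : ℝ :=
  L (q.1, V q.1 q.2, deriv (V q.1) q.2)

/-- The action of the curve `V p` over the time interval `[0, T p]`. -/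
noncomputable def action (L : E × F × F → ℝ) (V : E → ℝ → F) (T : E → ℝ) (p : E) : ℝ :=
  ∫ ξ in (0 : ℝ)..T p, lagrangianAlong L V (p, ξ)

/-- The generalized momentum `∂L/∂u'` along the curve `u`, which pairs with the variation field in
the boundary terms of the first variation. -/
noncomputable def momentum (L : E × F × F → ℝ) (p : E) (u : ℝ → F) (ξ : ℝ) : F →L[ℝ] ℝ :=
  (fderiv ℝ L (p, u ξ, deriv u ξ)).comp ((ContinuousLinearMap.inr ℝ E (F × F)).comp (.inr ℝ F F))

/-- The generalized force `∂L/∂u` along the curve `u`, the right-hand side of the Euler-Lagrange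
equation. -/
noncomputable def force (L : E × F × F → ℝ) (p : E) (u : ℝ → F) (ξ : ℝ) : F →L[ℝ] ℝ :=
  (fderiv ℝ L (p, u ξ, deriv u ξ)).comp ((ContinuousLinearMap.inr ℝ E (F × F)).comp (.inl ℝ F F))

/-- The energy `⟨∂L/∂u', u'⟩ - L` along the curve `u`; up to sign, it multiplies the variation of
the period in the first variation of the action. -/
noncomputable def energy (L : E × F × F → ℝ) (p : E) (u : ℝ → F) (ξ : ℝ) : ℝ :=
  momentum L p u ξ (deriv u ξ) - L (p, u ξ, deriv u ξ)

/-- The curve `u` solves the Euler-Lagrange equation `(∂L/∂u')' = ∂L/∂u` for the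
parameter value `p`. -/
def IsExtremal (L : E × F × F → ℝ) (p : E) (u : ℝ → F) : Prop :=
  ∀ ξ, HasDerivAt (momentum L p u) (force L p u ξ) ξ

/-- The variation field `∂_e V` of the family `V` at `p`, in the parameter direction `e`. -/
noncomputable def variation (V : E → ℝ → F) (p e : E) (ξ : ℝ) : F :=
  fderiv ℝ (uncurry V) (p, ξ) (e, 0)

variable {L : E × F × F → ℝ}

theorem deriv_eq_fderiv_uncurry (hΩ : IsOpen Ω) (hV : ContDiffOn ℝ 1 (uncurry V) (Ω ×ˢ univ))
    {q : E × ℝ} (hq : q.1 ∈ Ω) : deriv (V q.1) q.2 = fderiv ℝ (uncurry V) q (0, 1) :=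
  (hasDerivAt_section hΩ hV hq q.2).deriv

theorem contDiffOn_deriv_uncurry {m n : WithTop ℕ∞} (hΩ : IsOpen Ω)
    (hV : ContDiffOn ℝ n (uncurry V) (Ω ×ˢ univ)) (hmn : m + 1 ≤ n) :
    ContDiffOn ℝ m (fun q : E × ℝ => deriv (V q.1) q.2) (Ω ×ˢ univ) :=
  ((hV.fderiv_of_isOpen (hΩ.prod isOpen_univ) hmn).clm_apply contDiffOn_const).congr
    fun _ hq => deriv_eq_fderiv_uncurry hΩ (hV.of_le (le_add_self.trans hmn)) hq.1

theorem contDiffOn_lagrangianAlong {m n : WithTop ℕ∞} (hΩ : IsOpen Ω) (hL : ContDiff ℝ m L)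
    (hV : ContDiffOn ℝ n (uncurry V) (Ω ×ˢ univ)) (hmn : m + 1 ≤ n) :
    ContDiffOn ℝ m (lagrangianAlong L V) (Ω ×ˢ univ) :=
  hL.comp_contDiffOn (contDiffOn_fst.prodMk
    ((hV.of_le (le_self_add.trans hmn)).prodMk (contDiffOn_deriv_uncurry hΩ hV hmn)))

theorem contDiffOn_action {n : ℕ∞} (hΩ : IsOpen Ω) (hL : ContDiff ℝ n L)
    (hV : ContDiffOn ℝ (n + 1) (uncurry V) (Ω ×ˢ univ)) (hT : ContDiffOn ℝ n T Ω) :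
    ContDiffOn ℝ n (action L V T) Ω :=
  contDiffOn_intervalIntegral_right hΩ (contDiffOn_lagrangianAlong hΩ hL hV le_rfl) hT 0

theorem fderiv_fderiv_apply_comm {v : E → F} {x : E} (hv : ContDiffAt ℝ 2 v x) (y z : E) :
    fderiv ℝ (fun x => fderiv ℝ v x y) x z = fderiv ℝ (fun x => fderiv ℝ v x z) x y := by
  have hdiff : DifferentiableAt ℝ (fderiv ℝ v) x :=
    (hv.fderiv_right (m := 1) (by norm_num)).differentiableAt one_ne_zero
  have hsymm : IsSymmSndFDerivAt ℝ v x := hv.isSymmSndFDerivAt (by simp)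
  rw [fderiv_clm_apply hdiff (by fun_prop), fderiv_clm_apply hdiff (by fun_prop)]
  simp [hsymm.eq y z]

theorem hasDerivAt_variation (hΩ : IsOpen Ω) (hV : ContDiffOn ℝ 2 (uncurry V) (Ω ×ˢ univ))
    (hp : p ∈ Ω) (e : E) (ξ : ℝ) :
    HasDerivAt (variation V p e)
      (fderiv ℝ (fun q : E × ℝ => deriv (V q.1) q.2) (p, ξ) (e, 0)) ξ := by
  have hD : IsOpen (Ω ×ˢ (univ : Set ℝ)) := hΩ.prod isOpen_univ
  have hmem : Ω ×ˢ univ ∈ 𝓝 (p, ξ) := hD.mem_nhds ⟨hp, mem_univ ξ⟩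
  have hvel : (fun q : E × ℝ => deriv (V q.1) q.2) =ᶠ[𝓝 (p, ξ)]
      fun q => fderiv ℝ (uncurry V) q (0, 1) :=
    eventually_of_mem hmem fun _ hq => deriv_eq_fderiv_uncurry hΩ (hV.of_le one_le_two) hq.1
  rw [hvel.fderiv_eq, fderiv_fderiv_apply_comm (hV.contDiffAt hmem)]
  exact hasDerivAt_section hΩ
    ((hV.fderiv_of_isOpen hD (by norm_num)).clm_apply contDiffOn_const) hp ξ

theorem fderiv_lagrangianAlong_apply (hΩ : IsOpen Ω) (hL : ContDiff ℝ 1 L)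
    (hV : ContDiffOn ℝ 2 (uncurry V) (Ω ×ˢ univ)) (hp : p ∈ Ω) (ξ : ℝ) (d : E × ℝ) :
    fderiv ℝ (lagrangianAlong L V) (p, ξ) d =
      fderiv ℝ L (p, V p ξ, deriv (V p) ξ) (d.1, 0) +
        (force L p (V p) ξ (fderiv ℝ (uncurry V) (p, ξ) d) +
          momentum L p (V p) ξ (fderiv ℝ (fun q : E × ℝ => deriv (V q.1) q.2) (p, ξ) d)) := by
  have hpos := hasFDerivAt_of_contDiffOn_prod_univ hΩ (hV.of_le one_le_two) hp ξ
  have hvel := hasFDerivAt_of_contDiffOn_prod_univ hΩ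
    (contDiffOn_deriv_uncurry (m := 1) hΩ hV (by norm_num)) hp ξ
  have hjet : HasFDerivAt (fun q : E × ℝ => (q.1, uncurry V q, deriv (V q.1) q.2)) _ (p, ξ) :=
    hasFDerivAt_fst.prodMk (hpos.prodMk hvel)
  have hchain : HasFDerivAt (lagrangianAlong L V) _ (p, ξ) :=
    ((hL.differentiable one_ne_zero) (p, V p ξ, deriv (V p) ξ)).hasFDerivAt.comp (p, ξ) hjet
  rw [hchain.fderiv]
  simp only [force, momentum, ContinuousLinearMap.comp_apply, ContinuousLinearMap.inl_apply,
    ContinuousLinearMap.inr_apply, ← map_add]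
  simp

theorem hasDerivAt_momentum_variation (hΩ : IsOpen Ω) (hL : ContDiff ℝ 1 L)
    (hV : ContDiffOn ℝ 2 (uncurry V) (Ω ×ˢ univ)) (hp : p ∈ Ω) (hext : IsExtremal L p (V p))
    (e : E) (ξ : ℝ) :
    HasDerivAt (fun ξ => momentum L p (V p) ξ (variation V p e ξ))
      (fderiv ℝ (lagrangianAlong L V) (p, ξ) (e, 0) -
        fderiv ℝ L (p, V p ξ, deriv (V p) ξ) (e, 0)) ξ := by
  refine ((hext ξ).clm_apply (hasDerivAt_variation hΩ hV hp e ξ)).congr_deriv ?_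
  rw [fderiv_lagrangianAlong_apply hΩ hL hV hp, add_sub_cancel_left, variation]

theorem continuous_fderiv_lagrangian (hΩ : IsOpen Ω) (hL : ContDiff ℝ 1 L)
    (hV : ContDiffOn ℝ 1 (uncurry V) (Ω ×ˢ univ)) (hp : p ∈ Ω) :
    Continuous fun ξ => (fderiv ℝ L (p, V p ξ, deriv (V p) ξ)).comp (.inl ℝ E (F × F)) := by
  have hpos : Continuous (V p) := continuous_section hV.continuousOn hp
  have hvel : Continuous (deriv (V p)) := continuous_section
    (contDiffOn_deriv_uncurry (m := 0) hΩ hV (by norm_num)).continuousOn hp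
  exact ((hL.continuous_fderiv one_ne_zero).comp (by fun_prop)).clm_comp continuous_const

theorem integral_fderiv_lagrangianAlong (hΩ : IsOpen Ω) (hL : ContDiff ℝ 1 L)
    (hV : ContDiffOn ℝ 2 (uncurry V) (Ω ×ˢ univ)) (hp : p ∈ Ω) (hext : IsExtremal L p (V p))
    (e : E) (a b : ℝ) :
    ∫ ξ in a..b, fderiv ℝ (lagrangianAlong L V) (p, ξ) (e, 0) =
      (∫ ξ in a..b, fderiv ℝ L (p, V p ξ, deriv (V p) ξ) (e, 0)) +
        (momentum L p (V p) b (variation V p e b) -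
          momentum L p (V p) a (variation V p e a)) := by
  have hLagr : Continuous fun ξ => fderiv ℝ (lagrangianAlong L V) (p, ξ) (e, 0) :=
    (continuous_fderiv_comp_inl hΩ (contDiffOn_lagrangianAlong hΩ hL hV (by norm_num))
      hp).clm_apply (continuous_const (y := e))
  have hparam : Continuous fun ξ => fderiv ℝ L (p, V p ξ, deriv (V p) ξ) (e, 0) :=
    (continuous_fderiv_lagrangian hΩ hL (hV.of_le one_le_two) hp).clm_apply
      (continuous_const (y := e))
  rw [← sub_eq_iff_eq_add', ← intervalIntegral.integral_sub (hLagr.intervalIntegrable a b)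
    (hparam.intervalIntegrable a b)]
  exact intervalIntegral.integral_eq_sub_of_hasDerivAt
    (fun ξ _ => hasDerivAt_momentum_variation hΩ hL hV hp hext e ξ)
    ((hLagr.sub hparam).intervalIntegrable a b)

theorem periodic_deriv {u : ℝ → F} {c : ℝ} (hu : Periodic u c) : Periodic (deriv u) c := fun ξ => by
  rw [← deriv_comp_add_const, hu.funext]

theorem variation_add_smul_deriv_of_periodic (hΩ : IsOpen Ω)
    (hV : ContDiffOn ℝ 1 (uncurry V) (Ω ×ˢ univ)) {T' : E →L[ℝ] ℝ} (hT : HasFDerivAt T T' p)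
    (hper : ∀ q ∈ Ω, Periodic (V q) (T q)) (hp : p ∈ Ω) (e : E) :
    variation V p e (T p) + T' e • deriv (V p) 0 = variation V p e 0 := by
  have hend : HasFDerivAt (fun q => V q (T q)) _ p :=
    (hasFDerivAt_of_contDiffOn_prod_univ hΩ hV hp (T p)).comp (f := fun q => (q, T q)) p
      ((hasFDerivAt_id p).prodMk hT)
  have hstart : HasFDerivAt (fun q => V q 0) _ p :=
    (hasFDerivAt_of_contDiffOn_prod_univ hΩ hV hp 0).comp (f := fun q => (q, (0 : ℝ))) p
      (hasFDerivAt_prodMk_left p 0)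
  have heq : (fun q => V q (T q)) =ᶠ[𝓝 p] fun q => V q 0 :=
    eventually_of_mem (hΩ.mem_nhds hp) fun q hq => (hper q hq).eq
  rw [← (periodic_deriv (hper p hp)).eq, deriv_eq_fderiv_uncurry hΩ hV (q := (p, T p)) hp,
    variation, variation, ← map_smul, ← map_add]
  simpa using DFunLike.congr_fun (hend.unique (hstart.congr_of_eventuallyEq heq)) e

theorem hasFDerivAt_action (hΩ : IsOpen Ω) (hL : ContDiff ℝ 1 L)
    (hV : ContDiffOn ℝ 2 (uncurry V) (Ω ×ˢ univ))
    {T' : E →L[ℝ] ℝ} (hT : HasFDerivAt T T' p) (hper : ∀ q ∈ Ω, Periodic (V q) (T q))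
    (hp : p ∈ Ω) (hext : IsExtremal L p (V p)) :
    HasFDerivAt (action L V T)
      ((∫ ξ in (0 : ℝ)..T p, (fderiv ℝ L (p, V p ξ, deriv (V p) ξ)).comp (.inl ℝ E (F × F))) -
        energy L p (V p) 0 • T') p := by
  have hlag : ContDiffOn ℝ 1 (lagrangianAlong L V) (Ω ×ˢ univ) :=
    contDiffOn_lagrangianAlong hΩ hL hV (by norm_num)
  refine (hasFDerivAt_intervalIntegral_right hΩ hlag hT hp 0).congr_fderiv ?_
  ext e
  have hpos : V p (T p) = V p 0 := (hper p hp).eq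
  have hvel : deriv (V p) (T p) = deriv (V p) 0 := (periodic_deriv (hper p hp)).eq
  have hmom : momentum L p (V p) (T p) = momentum L p (V p) 0 := by
    simp only [momentum, hpos, hvel]
  have hparts := integral_fderiv_lagrangianAlong hΩ hL hV hp hext e 0 (T p)
  rw [← variation_add_smul_deriv_of_periodic hΩ (hV.of_le one_le_two) hT hper hp e, hmom,
    map_add, map_smul, smul_eq_mul] at hparts
  simp only [add_apply, sub_apply, smul_apply, ContinuousLinearMap.smulRight_apply, smul_eq_mul,
    ContinuousLinearMap.intervalIntegral_apply
      ((continuous_fderiv_comp_inl hΩ hlag hp).intervalIntegrable 0 (T p)),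
    ContinuousLinearMap.intervalIntegral_apply ((continuous_fderiv_lagrangian hΩ hL
      (hV.of_le one_le_two) hp).intervalIntegrable 0 (T p)),
    ContinuousLinearMap.comp_apply, ContinuousLinearMap.inl_apply, energy, lagrangianAlong,
    hpos, hvel]
  linear_combination hparts

end ActionOfFamily

section WaveProfile

/-- The Lagrangian `(1/2) κ(v) v_x² + f(v) + (c/(2b)) v² + λ v + μ` of the profile equation, as a
function of the parameters `(μ, c, λ)`, the position `v` and the velocity `v_x`. -/
noncomputable def profileLagrangian (b : ℝ) (f κ : ℝ → ℝ) (r : (ℝ × ℝ × ℝ) × ℝ × ℝ) : ℝ :=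
  (1 / 2) * κ r.2.1 * r.2.2 ^ 2 + f r.2.1 + (r.1.2.1 / (2 * b)) * r.2.1 ^ 2 + r.1.2.2 * r.2.1
    + r.1.1

variable {b : ℝ} {f κ : ℝ → ℝ} {p : ℝ × ℝ × ℝ} {u : ℝ → ℝ}

theorem contDiff_profileLagrangian {n : WithTop ℕ∞} (hf : ContDiff ℝ n f) (hκ : ContDiff ℝ n κ) :
    ContDiff ℝ n (profileLagrangian b f κ) := by
  unfold profileLagrangian
  fun_prop

theorem fderiv_profileLagrangian_apply (hf : Differentiable ℝ f) (hκ : Differentiable ℝ κ)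
    (v w : ℝ) (e : ℝ × ℝ × ℝ) (y z : ℝ) :
    fderiv ℝ (profileLagrangian b f κ) (p, v, w) (e, y, z) =
      (e.1 + e.2.1 * (v ^ 2 / (2 * b)) + e.2.2 * v) +
        ((1 / 2) * deriv κ v * w ^ 2 + deriv f v + (p.2.1 / b) * v + p.2.2) * y +
          κ v * w * z := by
  have hcoord (x d : ℝ) : HasDerivAt (fun t : ℝ => x + t * d) d 0 := by
    simpa using ((hasDerivAt_id (0 : ℝ)).mul_const d).const_add x
  have hcomp {φ : ℝ → ℝ} (hφ : Differentiable ℝ φ) :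
      HasDerivAt (fun t : ℝ => φ (v + t * y)) (deriv φ v * y) 0 :=
    HasDerivAt.comp_of_eq 0 (hφ v).hasDerivAt (hcoord v y) (by simp)
  have hline : HasDerivAt
      (fun t : ℝ => profileLagrangian b f κ ((p, v, w) + t • (e, y, z))) _ 0 :=
    ((((((hcomp hκ).const_mul (1 / 2)).mul ((hcoord w z).pow 2)).add (hcomp hf)).add
      (((hcoord p.2.1 e.2.1).div_const (2 * b)).mul ((hcoord v y).pow 2))).add
      ((hcoord p.2.2 e.2.2).mul (hcoord v y))).add (hcoord p.1 e.1)
  have hdiff : DifferentiableAt ℝ (profileLagrangian b f κ) (p, v, w) := by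
    unfold profileLagrangian
    fun_prop
  refine (HasDerivAt.unique (hdiff.hasFDerivAt.hasLineDerivAt (e, y, z)) hline).trans ?_
  simp only [Pi.pow_apply, zero_mul, add_zero, Nat.cast_ofNat, Nat.add_one_sub_one, pow_one]
  ring

theorem momentum_profileLagrangian (hf : Differentiable ℝ f) (hκ : Differentiable ℝ κ) (ξ : ℝ) :
    momentum (profileLagrangian b f κ) p u ξ = .toSpanSingleton ℝ (κ (u ξ) * deriv u ξ) := by
  ext
  simp [momentum, fderiv_profileLagrangian_apply hf hκ]

theorem force_profileLagrangian (hf : Differentiable ℝ f) (hκ : Differentiable ℝ κ) (ξ : ℝ) :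
    force (profileLagrangian b f κ) p u ξ = .toSpanSingleton ℝ
      ((1 / 2) * deriv κ (u ξ) * deriv u ξ ^ 2 + deriv f (u ξ) + (p.2.1 / b) * u ξ + p.2.2) := by
  ext
  simp [force, fderiv_profileLagrangian_apply hf hκ]

theorem isExtremal_profileLagrangian (hf : Differentiable ℝ f) (hκ : Differentiable ℝ κ)
    (hu : Differentiable ℝ u) (hu' : Differentiable ℝ (deriv u))
    (hODE : ∀ ξ, κ (u ξ) * deriv (deriv u) ξ + (1 / 2) * deriv κ (u ξ) * deriv u ξ ^ 2
      + (-(deriv f (u ξ)) - (p.2.1 / b) * u ξ - p.2.2) = 0) :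
    IsExtremal (profileLagrangian b f κ) p u := by
  intro ξ
  have hmom : HasDerivAt (fun ξ => κ (u ξ) * deriv u ξ)
      (deriv κ (u ξ) * deriv u ξ * deriv u ξ + κ (u ξ) * deriv (deriv u) ξ) ξ :=
    ((hκ (u ξ)).hasDerivAt.comp ξ (hu ξ).hasDerivAt).mul (hu' ξ).hasDerivAt
  rw [funext (momentum_profileLagrangian hf hκ), force_profileLagrangian hf hκ]
  refine ((ContinuousLinearMap.toSpanSingletonCLE (𝕜 := ℝ) (E := ℝ)).hasFDerivAt.comp_hasDerivAt
    ξ hmom).congr_deriv (congrArg (ContinuousLinearMap.toSpanSingleton ℝ) ?_)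
  linear_combination hODE ξ

theorem energy_profileLagrangian_eq_zero (hf : Differentiable ℝ f) (hκ : Differentiable ℝ κ)
    {ξ : ℝ} (hfirst : (1 / 2) * κ (u ξ) * deriv u ξ ^ 2
      + (-(f (u ξ)) - (p.2.1 / (2 * b)) * u ξ ^ 2 - p.2.2 * u ξ) = p.1) :
    energy (profileLagrangian b f κ) p u ξ = 0 := by
  rw [energy, momentum_profileLagrangian hf hκ]
  simp only [profileLagrangian, ContinuousLinearMap.toSpanSingleton_apply, smul_eq_mul]
  linear_combination hfirst

theorem hasFDerivAt_action_profileLagrangian {Ω : Set (ℝ × ℝ × ℝ)} {V : ℝ × ℝ × ℝ → ℝ → ℝ}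
    {Ξ : ℝ × ℝ × ℝ → ℝ} (hf : ContDiff ℝ 1 f) (hκ : ContDiff ℝ 1 κ) (hΩ : IsOpen Ω)
    (hV : ContDiffOn ℝ 2 (uncurry V) (Ω ×ˢ univ)) (hΞ : DifferentiableAt ℝ Ξ p)
    (hper : ∀ q ∈ Ω, Periodic (V q) (Ξ q)) (hp : p ∈ Ω)
    (hODE : ∀ ξ, κ (V p ξ) * deriv (deriv (V p)) ξ
      + (1 / 2) * deriv κ (V p ξ) * deriv (V p) ξ ^ 2
      + (-(deriv f (V p ξ)) - (p.2.1 / b) * V p ξ - p.2.2) = 0)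
    (hfirst : (1 / 2) * κ (V p 0) * deriv (V p) 0 ^ 2
      + (-(f (V p 0)) - (p.2.1 / (2 * b)) * V p 0 ^ 2 - p.2.2 * V p 0) = p.1) :
    HasFDerivAt (action (profileLagrangian b f κ) V Ξ)
      (Ξ p • .fst ℝ ℝ (ℝ × ℝ) +
        (∫ ξ in (0 : ℝ)..Ξ p, V p ξ ^ 2 / (2 * b)) • .comp (.fst ℝ ℝ ℝ) (.snd ℝ ℝ (ℝ × ℝ)) +
        (∫ ξ in (0 : ℝ)..Ξ p, V p ξ) • .comp (.snd ℝ ℝ ℝ) (.snd ℝ ℝ (ℝ × ℝ))) p := by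
  have hf' : Differentiable ℝ f := hf.differentiable one_ne_zero
  have hκ' : Differentiable ℝ κ := hκ.differentiable one_ne_zero
  have hL : ContDiff ℝ 1 (profileLagrangian b f κ) := contDiff_profileLagrangian hf hκ
  have hext : IsExtremal (profileLagrangian b f κ) p (V p) :=
    isExtremal_profileLagrangian hf' hκ'
      (fun ξ => (hasDerivAt_section hΩ (hV.of_le one_le_two) hp ξ).differentiableAt)
      (fun ξ => (hasDerivAt_section hΩ
        (contDiffOn_deriv_uncurry hΩ hV (by norm_num)) hp ξ).differentiableAt) hODE
  have hgrad := hasFDerivAt_action hΩ hL hV hΞ.hasFDerivAt hper hp hext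
  rw [energy_profileLagrangian_eq_zero hf' hκ' hfirst, zero_smul, sub_zero] at hgrad
  refine hgrad.congr_fderiv (ContinuousLinearMap.ext fun e => ?_)
  have hcont : Continuous (V p) := continuous_section hV.continuousOn hp
  have hint {φ : ℝ → ℝ} (hφ : Continuous φ) : IntervalIntegrable φ MeasureTheory.volume 0 (Ξ p) :=
    hφ.intervalIntegrable 0 (Ξ p)
  rw [ContinuousLinearMap.intervalIntegral_apply
    ((continuous_fderiv_lagrangian hΩ hL (hV.of_le one_le_two) hp).intervalIntegrable 0 (Ξ p))]
  have hparam (ξ : ℝ) : (fderiv ℝ (profileLagrangian b f κ) (p, V p ξ, deriv (V p) ξ)).comp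
      (.inl ℝ (ℝ × ℝ × ℝ) (ℝ × ℝ)) e = e.1 + e.2.1 * (V p ξ ^ 2 / (2 * b)) + e.2.2 * V p ξ :=
    (fderiv_profileLagrangian_apply hf' hκ' (V p ξ) (deriv (V p) ξ) e 0 0).trans (by simp)
  simp only [hparam]
  rw [intervalIntegral.integral_add (hint (by fun_prop)) (hint (by fun_prop)),
    intervalIntegral.integral_add (hint (by fun_prop)) (hint (by fun_prop))]
  simp [mul_comm]

theorem stmt3_general {n : ℕ∞} (hn : 1 ≤ n) (_hb : b ≠ 0) (hf : ContDiff ℝ n f)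
    (hκ : ContDiff ℝ n κ) {Ω : Set (ℝ × ℝ × ℝ)} (hΩ : IsOpen Ω) {V : ℝ × ℝ × ℝ → ℝ → ℝ}
    {Ξ : ℝ × ℝ × ℝ → ℝ} (hV : ContDiffOn ℝ (n + 1) (uncurry V) (Ω ×ˢ univ))
    (hΞ : ContDiffOn ℝ n Ξ Ω) (hper : ∀ p ∈ Ω, Periodic (V p) (Ξ p))
    (hODE : ∀ p ∈ Ω, ∀ ξ, κ (V p ξ) * deriv (deriv (V p)) ξ
      + (1 / 2) * deriv κ (V p ξ) * deriv (V p) ξ ^ 2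
      + (-(deriv f (V p ξ)) - (p.2.1 / b) * V p ξ - p.2.2) = 0)
    (hfirst : ∀ p ∈ Ω, ∀ ξ, (1 / 2) * κ (V p ξ) * deriv (V p) ξ ^ 2
      + (-(f (V p ξ)) - (p.2.1 / (2 * b)) * V p ξ ^ 2 - p.2.2 * V p ξ) = p.1) :
    ContDiffOn ℝ n (action (profileLagrangian b f κ) V Ξ) Ω ∧
    ∀ p ∈ Ω,
      HasDerivAt (fun μ => action (profileLagrangian b f κ) V Ξ (μ, p.2)) (Ξ p) p.1 ∧
      HasDerivAt (fun c => action (profileLagrangian b f κ) V Ξ (p.1, c, p.2.2))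
        (∫ ξ in (0 : ℝ)..Ξ p, V p ξ ^ 2 / (2 * b)) p.2.1 ∧
      HasDerivAt (fun l => action (profileLagrangian b f κ) V Ξ (p.1, p.2.1, l))
        (∫ ξ in (0 : ℝ)..Ξ p, V p ξ) p.2.2 := by
  have hn' : (1 : WithTop ℕ∞) ≤ n := mod_cast hn
  have hn2 : (2 : WithTop ℕ∞) ≤ n + 1 := one_add_one_eq_two.symm.trans_le (add_le_add_left hn' 1)
  refine ⟨contDiffOn_action hΩ (contDiff_profileLagrangian hf hκ) hV hΞ, fun p hp => ?_⟩
  have hΞ' : DifferentiableAt ℝ Ξ p :=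
    (hΞ.contDiffAt (hΩ.mem_nhds hp)).differentiableAt (one_pos.trans_le hn').ne'
  have hgrad := hasFDerivAt_action_profileLagrangian (hf.of_le hn') (hκ.of_le hn') hΩ
    (hV.of_le hn2) hΞ' hper hp (hODE p hp) (hfirst p hp 0)
  have hμ : HasDerivAt (fun μ => (μ, p.2)) (1, 0) p.1 :=
    (hasDerivAt_id _).prodMk (hasDerivAt_const _ _)
  have hc : HasDerivAt (fun c => (p.1, c, p.2.2)) (0, 1, 0) p.2.1 :=
    (hasDerivAt_const _ _).prodMk ((hasDerivAt_id _).prodMk (hasDerivAt_const _ _))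
  have hl : HasDerivAt (fun l => (p.1, p.2.1, l)) (0, 0, 1) p.2.2 :=
    (hasDerivAt_const _ _).prodMk ((hasDerivAt_const _ _).prodMk (hasDerivAt_id _))
  exact ⟨(hgrad.comp_hasDerivAt (f := fun μ => (μ, p.2)) p.1 hμ).congr_deriv (by simp),
    (hgrad.comp_hasDerivAt (f := fun c => (p.1, c, p.2.2)) p.2.1 hc).congr_deriv (by simp),
    (hgrad.comp_hasDerivAt (f := fun l => (p.1, p.2.1, l)) p.2.2 hl).congr_deriv (by simp)⟩

end WaveProfile

/-- scalar case of Proposition 1: the abbreviated action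
`Θ(μ,c,λ) = ∫₀^{Ξ} ( (1/2) κ(v̲)(v̲')² + f(v̲) + (c/(2b)) v̲² + λ v̲ + μ ) dξ`
along a smooth family of non-constant periodic profiles (solving the profile ODE
with potential `W(v;c,λ) = −f(v) − (c/(2b)) v² − λ v` and first integral `μ`) is
smooth, with `∂_μΘ = Ξ`, `∂_cΘ = ∫₀^{Ξ} v̲²/(2b)`, `∂_λΘ = ∫₀^{Ξ} v̲`. -/
theorem stmt3 (b : ℝ) (hb : b ≠ 0) (f κ : ℝ → ℝ)
    (hf : ContDiff ℝ (⊤ : ℕ∞) f) (hκ : ContDiff ℝ (⊤ : ℕ∞) κ) (hκpos : ∀ v : ℝ, 0 < κ v)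
    (Ω : Set (ℝ × ℝ × ℝ)) (hΩ : IsOpen Ω)
    (V : ℝ × ℝ × ℝ → ℝ → ℝ) (Ξ : ℝ × ℝ × ℝ → ℝ)
    (hV : ContDiffOn ℝ (⊤ : ℕ∞) (fun q : (ℝ × ℝ × ℝ) × ℝ => V q.1 q.2) (Ω ×ˢ Set.univ))
    (hΞsmooth : ContDiffOn ℝ (⊤ : ℕ∞) Ξ Ω) (hΞpos : ∀ p ∈ Ω, 0 < Ξ p)
    (hnc : ∀ p ∈ Ω, ¬ ∃ a : ℝ, ∀ ξ : ℝ, V p ξ = a)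
    (hper : ∀ p ∈ Ω, Function.Periodic (V p) (Ξ p))
    (hleast : ∀ p ∈ Ω, ∀ T : ℝ, 0 < T → Function.Periodic (V p) T → Ξ p ≤ T)
    (hODE : ∀ p ∈ Ω, ∀ ξ : ℝ,
      κ (V p ξ) * deriv (deriv (V p)) ξ
        + (1/2) * deriv κ (V p ξ) * (deriv (V p) ξ) ^ 2
        + (-(deriv f (V p ξ)) - (p.2.1 / b) * V p ξ - p.2.2) = 0)
    (hfirst : ∀ p ∈ Ω, ∀ ξ : ℝ,
      (1/2) * κ (V p ξ) * (deriv (V p) ξ) ^ 2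
        + (-(f (V p ξ)) - (p.2.1 / (2*b)) * (V p ξ) ^ 2 - p.2.2 * V p ξ) = p.1) :
    ContDiffOn ℝ (⊤ : ℕ∞)
      (fun p : ℝ × ℝ × ℝ => ∫ ξ in (0:ℝ)..(Ξ p),
        ((1/2) * κ (V p ξ) * (deriv (V p) ξ) ^ 2 + f (V p ξ)
          + (p.2.1 / (2*b)) * (V p ξ) ^ 2 + p.2.2 * V p ξ + p.1)) Ω ∧
    ∀ p ∈ Ω,
      HasDerivAt (fun μ : ℝ => ∫ ξ in (0:ℝ)..(Ξ (μ, p.2)),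
          ((1/2) * κ (V (μ, p.2) ξ) * (deriv (V (μ, p.2)) ξ) ^ 2 + f (V (μ, p.2) ξ)
            + (p.2.1 / (2*b)) * (V (μ, p.2) ξ) ^ 2 + p.2.2 * V (μ, p.2) ξ + μ))
        (Ξ p) p.1 ∧
      HasDerivAt (fun c : ℝ => ∫ ξ in (0:ℝ)..(Ξ (p.1, c, p.2.2)),
          ((1/2) * κ (V (p.1, c, p.2.2) ξ) * (deriv (V (p.1, c, p.2.2)) ξ) ^ 2
            + f (V (p.1, c, p.2.2) ξ)
            + (c / (2*b)) * (V (p.1, c, p.2.2) ξ) ^ 2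
            + p.2.2 * V (p.1, c, p.2.2) ξ + p.1))
        (∫ ξ in (0:ℝ)..(Ξ p), (V p ξ) ^ 2 / (2*b)) p.2.1 ∧
      HasDerivAt (fun l : ℝ => ∫ ξ in (0:ℝ)..(Ξ (p.1, p.2.1, l)),
          ((1/2) * κ (V (p.1, p.2.1, l) ξ) * (deriv (V (p.1, p.2.1, l)) ξ) ^ 2
            + f (V (p.1, p.2.1, l) ξ)
            + (p.2.1 / (2*b)) * (V (p.1, p.2.1, l) ξ) ^ 2
            + l * V (p.1, p.2.1, l) ξ + p.1))
        (∫ ξ in (0:ℝ)..(Ξ p), V p ξ) p.2.2 :=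
  stmt3_general le_top hb hf hκ hΩ hV hΞsmooth hper hODE hfirst
end

section
/- For every point p ∈ Ω, the differential at p of the map (μ, c, λ) ↦ (1/∂_μΘ, ∂_cΘ/∂_μΘ, ∇_λΘ/∂_μΘ) is an invertible linear map if and only if the Hessian ∇²Θ(p) is invertible. In particular, this map is a local diffeomorphism on Ω if and only if det ∇²Θ(μ, c, λ) ≠ 0 for all (μ, c, λ) ∈ Ω. -/
open Matrix

noncomputable section

/-- The state space `ℝ × ℝ × ℝ^N` with coordinates `(μ, c, λ)`
(respectively `(k, α, M)`). -/
abbrev E (N : ℕ) : Type := ℝ × ℝ × (Fin N → ℝ)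

/-- Index type for `(N+2) × (N+2)` matrices in `1 + 1 + N` block form. -/
abbrev Idx (N : ℕ) : Type := Fin 1 ⊕ Fin 1 ⊕ Fin N

/-- The standard basis of `ℝ × ℝ × ℝ^N`. -/
def basisVec (N : ℕ) : Idx N → E N :=
  Sum.elim (fun _ => (1, 0, 0))
    (Sum.elim (fun _ => (0, 1, 0)) (fun i => (0, 0, Pi.single i 1)))

/-- The impulse `Q(M) = (1/2) M · B⁻¹ M`. -/
def Qimp (N : ℕ) (B : Matrix (Fin N) (Fin N) ℝ) (M : Fin N → ℝ) : ℝ :=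
  (1/2) * (M ⬝ᵥ B⁻¹.mulVec M)

/-- Partial derivative `∂_μΘ`. -/
def dmu (N : ℕ) (Θ : E N → ℝ) (p : E N) : ℝ := fderiv ℝ Θ p (1, 0, 0)

/-- Partial derivative `∂_cΘ`. -/
def dc (N : ℕ) (Θ : E N → ℝ) (p : E N) : ℝ := fderiv ℝ Θ p (0, 1, 0)

/-- Gradient `∇_λΘ` in the `λ` variables. -/
def gradlam (N : ℕ) (Θ : E N → ℝ) (p : E N) : Fin N → ℝ :=
  fun i => fderiv ℝ Θ p (0, 0, Pi.single i 1)

/-- Hessian matrix of a function on `ℝ × ℝ × ℝ^N` in the standard basis. -/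
def hessMat (N : ℕ) (Θ : E N → ℝ) (p : E N) : Matrix (Idx N) (Idx N) ℝ :=
  Matrix.of fun i j =>
    fderiv ℝ (fun q => fderiv ℝ Θ q (basisVec N j)) p (basisVec N i)

/-- The wavenumber `k = 1/∂_μΘ`. -/
def kfun (N : ℕ) (Θ : E N → ℝ) (p : E N) : ℝ := 1 / dmu N Θ p

/-- The mean value `M = ∇_λΘ/∂_μΘ`. -/
def Mfun (N : ℕ) (Θ : E N → ℝ) (p : E N) : Fin N → ℝ :=
  (dmu N Θ p)⁻¹ • gradlam N Θ p

/-- The variable `α = ∂_cΘ − ∂_μΘ · Q(∇_λΘ/∂_μΘ)`. -/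
def afun (N : ℕ) (B : Matrix (Fin N) (Fin N) ℝ) (Θ : E N → ℝ) (p : E N) : ℝ :=
  dc N Θ p - dmu N Θ p * Qimp N B (Mfun N Θ p)

/-- The map `Φ = (k, α, M)`. -/
def Phi (N : ℕ) (B : Matrix (Fin N) (Fin N) ℝ) (Θ : E N → ℝ) (p : E N) : E N :=
  (kfun N Θ p, afun N B Θ p, Mfun N Θ p)

/-- `Φ` is a local diffeomorphism at `p`: it is smooth and injective on an open
neighborhood of `p`, its image is open, and it admits a smooth local inverse. -/
def IsLocalDiffeoAt (N : ℕ) (Φ : E N → E N) (p : E N) : Prop :=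
  ∃ s : Set (E N), IsOpen s ∧ p ∈ s ∧ ContDiffOn ℝ (⊤ : ℕ∞) Φ s ∧ Set.InjOn Φ s ∧
    IsOpen (Φ '' s) ∧ ∃ Ψ : E N → E N, (∀ x ∈ s, Ψ (Φ x) = x) ∧
      ContDiffOn ℝ (⊤ : ℕ∞) Ψ (Φ '' s)

end

/-!
The map is `J ∘ ∇Θ`, where `J (a, w) = (a⁻¹, a⁻¹ w)` is an involution of `{a ≠ 0}`, so `DJ` is
invertible there and `D(J ∘ ∇Θ)` is invertible exactly when `D(∇Θ)` is. The matrix of `D(∇Θ)` in the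
standard basis is the transposed Hessian, and the inverse function theorem turns invertibility of
the differential into the existence of a smooth local inverse.
-/

section Calculus

open Topology

theorem isInvertible_iff_bijective {𝕜 V W : Type*} [NontriviallyNormedField 𝕜]
    [NormedAddCommGroup V] [NormedSpace 𝕜 V] [CompleteSpace V]
    [NormedAddCommGroup W] [NormedSpace 𝕜 W] [CompleteSpace W] {A : V →L[𝕜] W} :
    A.IsInvertible ↔ Function.Bijective A := by
  refine ⟨fun h => h.bijective, fun h => ?_⟩
  exact ⟨.ofBijective A (LinearMap.ker_eq_bot.2 h.1) (LinearMap.range_eq_top.2 h.2),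
    ContinuousLinearEquiv.coe_ofBijective A _ _⟩

theorem isInvertible_iff_det_ne_zero {𝕜 V : Type*} [NontriviallyNormedField 𝕜] [CompleteSpace 𝕜]
    [NormedAddCommGroup V] [NormedSpace 𝕜 V] [FiniteDimensional 𝕜 V] {A : V →L[𝕜] V} :
    A.IsInvertible ↔ A.det ≠ 0 := by
  refine ⟨?_, fun h => ⟨A.toContinuousLinearEquivOfDetNeZero h,
    A.coe_toContinuousLinearEquivOfDetNeZero h⟩⟩
  rintro ⟨e, rfl⟩
  exact e.toLinearEquiv.isUnit_det'.ne_zero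

theorem isInvertible_comp_iff_right {𝕜 U V W : Type*} [Semiring 𝕜]
    [AddCommMonoid U] [Module 𝕜 U] [TopologicalSpace U]
    [AddCommMonoid V] [Module 𝕜 V] [TopologicalSpace V]
    [AddCommMonoid W] [Module 𝕜 W] [TopologicalSpace W]
    {A : V →L[𝕜] W} (hA : A.IsInvertible) {B : U →L[𝕜] V} :
    (A ∘L B).IsInvertible ↔ B.IsInvertible := by
  obtain ⟨e, rfl⟩ := hA
  exact ContinuousLinearMap.isInvertible_equiv_comp

section LocalInverse

variable {𝕜 V W : Type*} [NontriviallyNormedField 𝕜] [NormedAddCommGroup V] [NormedSpace 𝕜 V]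
  [NormedAddCommGroup W] [NormedSpace 𝕜 W] {f : V → W} {g : W → V} {x : V}

theorem fderiv_comp_fderiv_of_eventually_leftInverse (hf : DifferentiableAt 𝕜 f x)
    (hg : DifferentiableAt 𝕜 g (f x)) (hgf : ∀ᶠ y in 𝓝 x, g (f y) = y) :
    fderiv 𝕜 g (f x) ∘L fderiv 𝕜 f x = .id 𝕜 V := by
  rw [← fderiv_comp x hg hf]
  exact ((hasFDerivAt_id x).congr_of_eventuallyEq hgf).fderiv

theorem isInvertible_fderiv_of_eventually_inverse (hf : DifferentiableAt 𝕜 f x)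
    (hg : DifferentiableAt 𝕜 g (f x)) (hgf : ∀ᶠ y in 𝓝 x, g (f y) = y)
    (hfg : ∀ᶠ z in 𝓝 (f x), f (g z) = z) : (fderiv 𝕜 f x).IsInvertible := by
  have hx : g (f x) = x := hgf.self_of_nhds
  have hright := fderiv_comp_fderiv_of_eventually_leftInverse hg (by rwa [hx]) hfg
  rw [hx] at hright
  exact .of_inverse hright (fderiv_comp_fderiv_of_eventually_leftInverse hf hg hgf)

end LocalInverse

section InverseFunction

variable {𝕜 V W : Type*} [RCLike 𝕜] [NormedAddCommGroup V] [NormedSpace 𝕜 V] [CompleteSpace V]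
  [NormedAddCommGroup W] [NormedSpace 𝕜 W] {f : V → W} {x : V} {n : WithTop ℕ∞}

theorem eventually_isInvertible_fderiv (hf : ContDiffAt 𝕜 n f x) (hn : n ≠ 0)
    (hx : (fderiv 𝕜 f x).IsInvertible) : ∀ᶠ y in 𝓝 x, (fderiv 𝕜 f y).IsInvertible :=
  (hf.continuousAt_fderiv hn).eventually_mem (ContinuousLinearEquiv.isOpen.mem_nhds hx)

-- For `n = ∞`, smoothness at `x` alone gives no single neighbourhood on which `f` is smooth, hence
-- the hypothesis at all nearby points.
theorem exists_openPartialHomeomorph_contDiffOn (hf : ∀ᶠ y in 𝓝 x, ContDiffAt 𝕜 n f y)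
    (hn : n ≠ 0) (hx : (fderiv 𝕜 f x).IsInvertible) :
    ∃ e : OpenPartialHomeomorph V W, ⇑e = f ∧ x ∈ e.source ∧
      ContDiffOn 𝕜 n e e.source ∧ ContDiffOn 𝕜 n e.symm e.target := by
  obtain ⟨U, hU, hUo, hxU⟩ := eventually_nhds_iff.1
    (hf.and (eventually_isInvertible_fderiv hf.self_of_nhds hn hx))
  have hderiv : ∀ y ∈ U, ∃ A : V ≃L[𝕜] W, HasFDerivAt f (A : V →L[𝕜] W) y := by
    intro y hy
    obtain ⟨hfy, A, hA⟩ := hU y hy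
    exact ⟨A, hA ▸ (hfy.differentiableAt hn).hasFDerivAt⟩
  obtain ⟨A, hA⟩ := hderiv x hxU
  let e := (hf.self_of_nhds.toOpenPartialHomeomorph f hA hn).restrOpen U hUo
  refine ⟨e, rfl, ⟨hf.self_of_nhds.mem_toOpenPartialHomeomorph_source hA hn, hxU⟩,
    fun y hy => (hU y hy.2).1.contDiffWithinAt, fun z hz => ?_⟩
  have hzU : e.symm z ∈ U := (e.map_target hz).2
  obtain ⟨A', hA'⟩ := hderiv _ hzU
  exact (e.contDiffAt_symm hz hA' (hU _ hzU).1).contDiffWithinAt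

end InverseFunction

theorem isLocalDiffeoAt_iff_isInvertible_fderiv {N : ℕ} {F : E N → E N} {p : E N}
    (hF : ∀ᶠ q in 𝓝 p, ContDiffAt ℝ (⊤ : ℕ∞) F q) :
    IsLocalDiffeoAt N F p ↔ (fderiv ℝ F p).IsInvertible := by
  constructor
  · rintro ⟨s, hs, hps, -, -, himage, G, hGF, hG⟩
    have hFp : F '' s ∈ 𝓝 (F p) := himage.mem_nhds (Set.mem_image_of_mem F hps)
    refine isInvertible_fderiv_of_eventually_inverse (g := G)
      (hF.self_of_nhds.differentiableAt (by simp))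
      ((hG.contDiffAt hFp).differentiableAt (by simp)) ((hs.eventually_mem hps).mono hGF) ?_
    filter_upwards [hFp] with _ ⟨q, hq, hqz⟩
    rw [← hqz, hGF q hq]
  · intro hp
    obtain ⟨e, rfl, hpe, he, he_symm⟩ :=
      exists_openPartialHomeomorph_contDiffOn hF (by simp) hp
    refine ⟨e.source, e.open_source, hpe, he, e.injOn, ?_, e.symm, fun q => e.left_inv, ?_⟩
    all_goals rw [e.image_source_eq_target]
    exacts [e.open_target, he_symm]

end Calculus

section ProjInversion

open Topology

variable {𝕜 W : Type*} [NontriviallyNormedField 𝕜] [NormedAddCommGroup W] [NormedSpace 𝕜 W]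

/-- The map `(a, w) ↦ (a⁻¹, a⁻¹ w)`, which exchanges the first two homogeneous coordinates of
`[1 : a : w]`. It carries the gradient of `Θ` to the wavenumber and the averages. -/
def projInversion (x : 𝕜 × W) : 𝕜 × W := (x.1⁻¹, x.1⁻¹ • x.2)

theorem projInversion_projInversion {x : 𝕜 × W} (hx : x.1 ≠ 0) :
    projInversion (projInversion x) = x := by
  ext <;> simp [projInversion, hx]

theorem contDiffAt_projInversion {n : WithTop ℕ∞} {x : 𝕜 × W} (hx : x.1 ≠ 0) :
    ContDiffAt 𝕜 n projInversion x :=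
  have hinv : ContDiffAt 𝕜 n (fun y : 𝕜 × W => y.1⁻¹) x := contDiffAt_fst.inv hx
  hinv.prodMk (hinv.smul contDiffAt_snd)

theorem isInvertible_fderiv_projInversion {x : 𝕜 × W} (hx : x.1 ≠ 0) :
    (fderiv 𝕜 (projInversion : 𝕜 × W → 𝕜 × W) x).IsInvertible := by
  have hx' : (projInversion x).1 ≠ 0 := inv_ne_zero hx
  have hdiff : ∀ y : 𝕜 × W, y.1 ≠ 0 → DifferentiableAt 𝕜 projInversion y := fun y hy =>
    (contDiffAt_projInversion (n := 1) hy).differentiableAt one_ne_zero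
  have hinvol : ∀ y : 𝕜 × W, y.1 ≠ 0 → ∀ᶠ z in 𝓝 y, projInversion (projInversion z) = z :=
    fun y hy => (continuousAt_fst.eventually_ne hy).mono fun z => projInversion_projInversion
  exact isInvertible_fderiv_of_eventually_inverse (hdiff x hx) (hdiff _ hx') (hinvol x hx)
    (hinvol _ hx')

end ProjInversion

section Gradient

variable {𝕜 V ι : Type*} [NontriviallyNormedField 𝕜] [NormedAddCommGroup V] [NormedSpace 𝕜 V]
  [Fintype ι] (b : Module.Basis ι 𝕜 V) {Θ : V → 𝕜} {p : V}

/-- The gradient of `Θ` in the basis `b`: the vector whose coordinates in `b` are the partial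
derivatives of `Θ` along `b`. -/
noncomputable def basisGradient (Θ : V → 𝕜) (q : V) : V := ∑ i, fderiv 𝕜 Θ q (b i) • b i

theorem contDiffAt_basisGradient {m n : WithTop ℕ∞} (hΘ : ContDiffAt 𝕜 n Θ p) (hmn : m + 1 ≤ n) :
    ContDiffAt 𝕜 m (basisGradient b Θ) p :=
  ContDiffAt.sum fun _ _ =>
    ((hΘ.fderiv_right hmn).clm_apply contDiffAt_const).smul contDiffAt_const

theorem toMatrix_fderiv_basisGradient [DecidableEq ι] (hΘ : DifferentiableAt 𝕜 (fderiv 𝕜 Θ) p) :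
    LinearMap.toMatrix b b (fderiv 𝕜 (basisGradient b Θ) p) =
      (Matrix.of fun i j => fderiv 𝕜 (fun q => fderiv 𝕜 Θ q (b j)) p (b i))ᵀ := by
  have hderiv : HasFDerivAt (basisGradient b Θ)
      (∑ i, (fderiv 𝕜 (fun q => fderiv 𝕜 Θ q (b i)) p).smulRight (b i)) p :=
    .fun_sum fun i _ =>
      (hΘ.clm_apply (differentiableAt_const (b i))).hasFDerivAt.smul_const (b i)
  ext i j
  rw [hderiv.fderiv, LinearMap.toMatrix_apply]
  simp [b.repr_sum_self, -map_sum]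

end Gradient

section Averages

open Topology

variable (N : ℕ) {Θ : E N → ℝ} {p : E N}

/-- The standard basis of `ℝ × ℝ × ℝ^N`, bundling the vectors `basisVec N`. -/
noncomputable def stateBasis : Module.Basis (Idx N) ℝ (E N) :=
  (Module.Basis.singleton (Fin 1) ℝ).prod
    ((Module.Basis.singleton (Fin 1) ℝ).prod (Pi.basisFun ℝ (Fin N)))

theorem coe_stateBasis : ⇑(stateBasis N) = basisVec N := by
  funext i
  rcases i with i | i | i <;> simp [stateBasis, basisVec, Prod.ext_iff]

theorem basisGradient_stateBasis (Θ : E N → ℝ) (q : E N) :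
    basisGradient (stateBasis N) Θ q = (dmu N Θ q, dc N Θ q, gradlam N Θ q) := by
  rw [basisGradient, ← (stateBasis N).sum_repr (dmu N Θ q, dc N Θ q, gradlam N Θ q),
    coe_stateBasis]
  refine Finset.sum_congr rfl fun i _ => ?_
  rcases i with i | i | i <;> simp [stateBasis, basisVec, dmu, dc, gradlam]

/-- The wavenumber and the averages `(k, ⟨Q(U)⟩, ⟨U⟩)` as functions of `(μ, c, λ)`, expressed
through the action `Θ`. -/
noncomputable def averages (Θ : E N → ℝ) (q : E N) : E N :=
  (1 / dmu N Θ q, dc N Θ q / dmu N Θ q, (dmu N Θ q)⁻¹ • gradlam N Θ q)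

variable {N}

theorem averages_eq_projInversion_comp :
    averages N Θ = projInversion ∘ basisGradient (stateBasis N) Θ := by
  funext q
  simp only [averages, Function.comp_apply, basisGradient_stateBasis, projInversion, Prod.smul_mk,
    div_eq_inv_mul, mul_one, smul_eq_mul]

theorem isInvertible_fderiv_basisGradient_stateBasis_iff (hΘ : DifferentiableAt ℝ (fderiv ℝ Θ) p) :
    (fderiv ℝ (basisGradient (stateBasis N) Θ) p).IsInvertible ↔ (hessMat N Θ p).det ≠ 0 := by
  rw [isInvertible_iff_det_ne_zero, ContinuousLinearMap.det,
    ← LinearMap.det_toMatrix (stateBasis N), toMatrix_fderiv_basisGradient _ hΘ,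
    Matrix.det_transpose, coe_stateBasis, hessMat]

theorem isInvertible_fderiv_averages_iff (hΘ : ContDiffAt ℝ 2 Θ p) (hμ : dmu N Θ p ≠ 0) :
    (fderiv ℝ (averages N Θ) p).IsInvertible ↔ (hessMat N Θ p).det ≠ 0 := by
  have hfst : (basisGradient (stateBasis N) Θ p).1 ≠ 0 := by rwa [basisGradient_stateBasis]
  have hgrad : DifferentiableAt ℝ (basisGradient (stateBasis N) Θ) p :=
    (contDiffAt_basisGradient (m := 1) _ hΘ (by norm_num)).differentiableAt one_ne_zero
  have hinv : DifferentiableAt ℝ projInversion (basisGradient (stateBasis N) Θ p) :=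
    (contDiffAt_projInversion (n := 1) hfst).differentiableAt one_ne_zero
  rw [averages_eq_projInversion_comp, fderiv_comp p hinv hgrad,
    isInvertible_comp_iff_right (isInvertible_fderiv_projInversion hfst)]
  exact isInvertible_fderiv_basisGradient_stateBasis_iff
    ((hΘ.fderiv_right (m := 1) (by norm_num)).differentiableAt one_ne_zero)

theorem contDiffAt_averages (hΘ : ContDiffAt ℝ (⊤ : ℕ∞) Θ p) (hμ : dmu N Θ p ≠ 0) :
    ContDiffAt ℝ (⊤ : ℕ∞) (averages N Θ) p := by
  rw [averages_eq_projInversion_comp]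
  refine (contDiffAt_projInversion ?_).comp p (contDiffAt_basisGradient _ hΘ (by simp))
  rwa [basisGradient_stateBasis]

theorem stmt4_general (hΘ : ∀ᶠ q in 𝓝 p, ContDiffAt ℝ (⊤ : ℕ∞) Θ q) (hμ : dmu N Θ p ≠ 0) :
    (Function.Bijective (fderiv ℝ (averages N Θ) p) ↔ (hessMat N Θ p).det ≠ 0) ∧
      (IsLocalDiffeoAt N (averages N Θ) p ↔ (hessMat N Θ p).det ≠ 0) := by
  have hinv := isInvertible_fderiv_averages_iff (contDiffAt_infty.1 hΘ.self_of_nhds 2) hμ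
  have hdmu : ContinuousAt (dmu N Θ) p :=
    (hΘ.self_of_nhds.continuousAt_fderiv (by simp)).clm_apply continuousAt_const
  have hsmooth : ∀ᶠ q in 𝓝 p, ContDiffAt ℝ (⊤ : ℕ∞) (averages N Θ) q := by
    filter_upwards [hΘ, hdmu.eventually_ne hμ] with q using contDiffAt_averages
  exact ⟨isInvertible_iff_bijective.symm.trans hinv,
    (isLocalDiffeoAt_iff_isInvertible_fderiv hsmooth).trans hinv⟩

end Averages

/-- the differential of `(μ,c,λ) ↦ (1/∂_μΘ, ∂_cΘ/∂_μΘ, ∇_λΘ/∂_μΘ)`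
is invertible at `p ∈ Ω` iff the Hessian `∇²Θ(p)` is invertible; in particular the
map is a local diffeomorphism on `Ω` iff `det ∇²Θ ≠ 0` on `Ω`. -/
theorem stmt4 (N : ℕ) (hN : 1 ≤ N) (B : Matrix (Fin N) (Fin N) ℝ)
    (hBsymm : B.IsSymm) (hBinv : IsUnit B.det)
    (Ω : Set (E N)) (hΩ : IsOpen Ω)
    (Θ : E N → ℝ) (hΘ : ContDiffOn ℝ (⊤ : ℕ∞) Θ Ω)
    (hμpos : ∀ p ∈ Ω, 0 < dmu N Θ p) :
    (∀ p ∈ Ω,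
      Function.Bijective
        (fderiv ℝ (fun q : E N =>
          ((1 / dmu N Θ q : ℝ), (dc N Θ q / dmu N Θ q : ℝ),
            (dmu N Θ q)⁻¹ • gradlam N Θ q)) p)
        ↔ (hessMat N Θ p).det ≠ 0) ∧
    ((∀ p ∈ Ω, IsLocalDiffeoAt N
        (fun q : E N =>
          ((1 / dmu N Θ q : ℝ), (dc N Θ q / dmu N Θ q : ℝ),
            (dmu N Θ q)⁻¹ • gradlam N Θ q)) p)
      ↔ (∀ p ∈ Ω, (hessMat N Θ p).det ≠ 0)) := by
  have h := fun p hp => stmt4_general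
    ((hΩ.eventually_mem hp).mono fun q hq => hΘ.contDiffAt (hΩ.mem_nhds hq)) (hμpos p hp).ne'
  exact ⟨fun p hp => (h p hp).1, forall₂_congr fun p hp => (h p hp).2⟩
end

section
/- Fix real numbers b ≠ 0, c, λ₂ and a smooth function τ : I → ℝ with τ > 0 on an open interval I. Define g(v) := −((c/b) v + λ₂)/τ(v) and q(v) := v g(v)/b on I. For v ∈ I define the vectors of ℝ⁴: V := (1, q(v), v, g(v)), W := (0, q'(v), 1, g'(v)), Z := (0, q''(v), 0, g''(v)), T := (1/√τ(v)) (0, v/b, 0, 1), E := (1,0,0,0), F := (0,−1,0,0), and let 𝕊 be the symmetric matrix [[0,−1,0,0],[−1,0,0,0],[0,0,0,b],[0,0,b,0]]. Then: V·𝕊⁻¹V = 0, V·𝕊⁻¹W = 0, V·𝕊⁻¹T = 0, V·𝕊⁻¹Z = −W·𝕊⁻¹W, T·𝕊⁻¹T = 0, T·𝕊⁻¹Z = 0, E = 𝕊⁻¹F, E·V = 1, E·W = 0, E·Z = 0, and E·T = 0. -/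
open Matrix

/-! Every vector `(1, Q(v, u), v, u)` with `Q(v, u) = v u / b` is isotropic for `𝕊⁻¹`. Along the
curve `u = g(v)` on this quadric, `V` is the position, `W` the velocity and `Z` the acceleration, so
the relations among them come from differentiating `V · 𝕊⁻¹V = 0` twice. Up to a scalar, `T` is the
`u`-derivative of `(1, Q(v, u), v, u)`, hence orthogonal to `V`. Finally `T` and `Z` lie in the
totally isotropic plane where the first and third coordinates vanish. -/

open Topology

section IsotropicCurve

variable {𝕜 m n : Type*} [NontriviallyNormedField 𝕜] [Fintype m] [Fintype n]

lemma hasDerivAt_dotProduct_mulVec (A : Matrix m n 𝕜) {f : 𝕜 → m → 𝕜} {h : 𝕜 → n → 𝕜}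
    {f' : m → 𝕜} {h' : n → 𝕜} {x : 𝕜} (hf : HasDerivAt f f' x) (hh : HasDerivAt h h' x) :
    HasDerivAt (fun t => f t ⬝ᵥ A *ᵥ h t) (f' ⬝ᵥ A *ᵥ h x + f x ⬝ᵥ A *ᵥ h') x := by
  rw [hasDerivAt_pi] at hf hh
  have hAh (i : m) : HasDerivAt (fun t => (A *ᵥ h t) i) ((A *ᵥ h') i) x :=
    HasDerivAt.fun_sum fun j _ => (hh j).const_mul (A i j)
  simp only [dotProduct, ← Finset.sum_add_distrib]
  exact HasDerivAt.fun_sum fun i _ => (hf i).mul (hAh i)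

lemma dotProduct_mulVec_comm_of_isSymm {R : Type*} [CommSemiring R] {A : Matrix n n R}
    (hA : A.IsSymm) (x y : n → R) : x ⬝ᵥ A *ᵥ y = y ⬝ᵥ A *ᵥ x := by
  rw [← dotProduct_transpose_mulVec, hA.eq]

variable [NeZero (2 : 𝕜)] {A : Matrix n n 𝕜} {γ γ' : 𝕜 → n → 𝕜} {x : 𝕜}

lemma isotropic_dotProduct_mulVec_velocity (hA : A.IsSymm) {w : n → 𝕜} (hγ : HasDerivAt γ w x)
    (hiso : ∀ᶠ t in 𝓝 x, γ t ⬝ᵥ A *ᵥ γ t = 0) : γ x ⬝ᵥ A *ᵥ w = 0 := by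
  have hderiv : w ⬝ᵥ A *ᵥ γ x + γ x ⬝ᵥ A *ᵥ w = 0 :=
    (hasDerivAt_dotProduct_mulVec A hγ hγ).unique <|
      (hasDerivAt_const x (0 : 𝕜)).congr_of_eventuallyEq hiso
  rw [dotProduct_mulVec_comm_of_isSymm hA, ← two_mul] at hderiv
  exact (mul_eq_zero.mp hderiv).resolve_left two_ne_zero

lemma isotropic_dotProduct_mulVec_acceleration (hA : A.IsSymm) {z : n → 𝕜}
    (hγ : ∀ᶠ t in 𝓝 x, HasDerivAt γ (γ' t) t) (hγ' : HasDerivAt γ' z x)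
    (hiso : ∀ᶠ t in 𝓝 x, γ t ⬝ᵥ A *ᵥ γ t = 0) :
    γ x ⬝ᵥ A *ᵥ z = -(γ' x ⬝ᵥ A *ᵥ γ' x) := by
  have hvel : ∀ᶠ t in 𝓝 x, γ t ⬝ᵥ A *ᵥ γ' t = 0 := by
    filter_upwards [hγ, hiso.eventually_nhds] with t ht htiso
    exact isotropic_dotProduct_mulVec_velocity hA ht htiso
  have hderiv : γ' x ⬝ᵥ A *ᵥ γ' x + γ x ⬝ᵥ A *ᵥ z = 0 :=
    (hasDerivAt_dotProduct_mulVec A hγ.self_of_nhds hγ').unique <|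
      (hasDerivAt_const x (0 : 𝕜)).congr_of_eventuallyEq hvel
  exact eq_neg_of_add_eq_zero_right hderiv

end IsotropicCurve

section StructureMatrix

lemma e₀_dotProduct {R : Type*} [NonAssocSemiring R] (x : Fin 4 → R) :
    ![1, 0, 0, 0] ⬝ᵥ x = x 0 := by
  simp [dotProduct, Fin.sum_univ_four]

variable {R K : Type*} [CommRing R] [Field K]

/-- The matrix `𝕊` for `N = 2`, i.e. `[[0, -1], [-1, 0]] ⊕ B` with `B = [[0, b], [b, 0]]`; its
inverse defines the pairing `x · 𝕊⁻¹y`. -/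
def structureMatrix (b : R) : Matrix (Fin 4) (Fin 4) R :=
  !![0, -1, 0, 0; -1, 0, 0, 0; 0, 0, 0, b; 0, 0, b, 0]

lemma structureMatrix_isSymm (b : R) : (structureMatrix b).IsSymm := by
  ext i j
  fin_cases i <;> fin_cases j <;> rfl

lemma dotProduct_structureMatrix_mulVec (b : R) (x y : Fin 4 → R) :
    x ⬝ᵥ structureMatrix b *ᵥ y =
      b * (x 2 * y 3 + x 3 * y 2) - (x 0 * y 1 + x 1 * y 0) := by
  simp only [structureMatrix, mulVec, dotProduct, Fin.sum_univ_four, of_apply, cons_val]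
  ring

lemma dotProduct_structureMatrix_mulVec_eq_zero (b : R) {x y : Fin 4 → R} (hx₀ : x 0 = 0)
    (hx₂ : x 2 = 0) (hy₀ : y 0 = 0) (hy₂ : y 2 = 0) : x ⬝ᵥ structureMatrix b *ᵥ y = 0 := by
  simp [dotProduct_structureMatrix_mulVec, hx₀, hx₂, hy₀, hy₂]

lemma structureMatrix_mulVec_neg_e₁ (b : R) :
    structureMatrix b *ᵥ ![0, -1, 0, 0] = ![1, 0, 0, 0] := by
  ext i
  fin_cases i <;> simp [structureMatrix, mulVec, dotProduct, Fin.sum_univ_four]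

lemma structureMatrix_inv {b : K} (hb : b ≠ 0) : (structureMatrix b)⁻¹ = structureMatrix b⁻¹ := by
  refine Matrix.inv_eq_right_inv ?_
  ext i j
  fin_cases i <;> fin_cases j <;>
    simp [structureMatrix, Matrix.mul_apply, Fin.sum_univ_four, hb]

/-- The vector `(1, Q(v, u), v, u)` attached to a state `(v, u)`, where `Q(v, u) = v u / b` is the
impulse; along a profile `u = g(v)` it is the vector `V`. -/
def stateVector (b v u : K) : Fin 4 → K :=
  ![1, v * u / b, v, u]

lemma stateVector_isotropic (b v u : K) :
    stateVector b v u ⬝ᵥ structureMatrix b⁻¹ *ᵥ stateVector b v u = 0 := by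
  rw [dotProduct_structureMatrix_mulVec]
  simp only [stateVector, cons_val]
  ring

lemma stateVector_orthogonal_vertical (b v u : K) :
    stateVector b v u ⬝ᵥ structureMatrix b⁻¹ *ᵥ ![0, v / b, 0, 1] = 0 := by
  rw [dotProduct_structureMatrix_mulVec]
  simp only [stateVector, cons_val]
  ring

end StructureMatrix

section Calculus

variable {𝕜 E : Type*} [NontriviallyNormedField 𝕜] [NormedAddCommGroup E] [NormedSpace 𝕜 E]
  {f : 𝕜 → E} {x : 𝕜}

lemma hasDerivAt_vec₄ {f₀ f₁ f₂ f₃ : 𝕜 → E} {a₀ a₁ a₂ a₃ : E} (h₀ : HasDerivAt f₀ a₀ x)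
    (h₁ : HasDerivAt f₁ a₁ x) (h₂ : HasDerivAt f₂ a₂ x) (h₃ : HasDerivAt f₃ a₃ x) :
    HasDerivAt (fun t => ![f₀ t, f₁ t, f₂ t, f₃ t]) ![a₀, a₁, a₂, a₃] x := by
  rw [hasDerivAt_pi]
  intro i
  fin_cases i <;> assumption

lemma hasDerivAt_deriv_of_contDiffAt_two (hf : ContDiffAt 𝕜 2 f x) :
    HasDerivAt (deriv f) (deriv (deriv f) x) x := by
  have hf' : ContDiffAt 𝕜 1 (deriv f) x := hf.derivWithin one_add_one_eq_two.le
  exact (hf'.differentiableAt one_ne_zero).hasDerivAt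

lemma eventually_hasDerivAt_of_contDiffAt_two (hf : ContDiffAt 𝕜 2 f x) :
    ∀ᶠ t in 𝓝 x, HasDerivAt f (deriv f t) t :=
  (hf.eventually (by simp)).mono fun _ ht => (ht.differentiableAt two_ne_zero).hasDerivAt

end Calculus

theorem stmt11_general {𝕜 : Type*} [NontriviallyNormedField 𝕜] [NeZero (2 : 𝕜)] {b : 𝕜}
    (hb : b ≠ 0) {g : 𝕜 → 𝕜} {v : 𝕜} (hg : ContDiffAt 𝕜 2 g v) (s : 𝕜) :
    let q : 𝕜 → 𝕜 := fun v => v * g v / b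
    let 𝕊 : Matrix (Fin 4) (Fin 4) 𝕜 := structureMatrix b
    let V : Fin 4 → 𝕜 := stateVector b v (g v)
    let W : Fin 4 → 𝕜 := ![0, deriv q v, 1, deriv g v]
    let Z : Fin 4 → 𝕜 := ![0, deriv (deriv q) v, 0, deriv (deriv g) v]
    let T : Fin 4 → 𝕜 := s • ![0, v / b, 0, 1]
    let E : Fin 4 → 𝕜 := ![1, 0, 0, 0]
    let F : Fin 4 → 𝕜 := ![0, -1, 0, 0]
    V ⬝ᵥ 𝕊⁻¹ *ᵥ V = 0 ∧
    V ⬝ᵥ 𝕊⁻¹ *ᵥ W = 0 ∧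
    V ⬝ᵥ 𝕊⁻¹ *ᵥ T = 0 ∧
    V ⬝ᵥ 𝕊⁻¹ *ᵥ Z = -(W ⬝ᵥ 𝕊⁻¹ *ᵥ W) ∧
    T ⬝ᵥ 𝕊⁻¹ *ᵥ T = 0 ∧
    T ⬝ᵥ 𝕊⁻¹ *ᵥ Z = 0 ∧
    E = 𝕊⁻¹ *ᵥ F ∧
    E ⬝ᵥ V = 1 ∧ E ⬝ᵥ W = 0 ∧ E ⬝ᵥ Z = 0 ∧ E ⬝ᵥ T = 0 := by
  intro q 𝕊 V W Z T E F
  have hq : ContDiffAt 𝕜 2 q v := (contDiffAt_id.mul hg).div_const b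
  have hVW : ∀ᶠ t in 𝓝 v,
      HasDerivAt (fun t => stateVector b t (g t)) ![0, deriv q t, 1, deriv g t] t := by
    filter_upwards [eventually_hasDerivAt_of_contDiffAt_two hq,
      eventually_hasDerivAt_of_contDiffAt_two hg] with t hqt hgt
    exact hasDerivAt_vec₄ (hasDerivAt_const t 1) hqt (hasDerivAt_id t) hgt
  have hWZ : HasDerivAt (fun t => ![0, deriv q t, 1, deriv g t]) Z v :=
    hasDerivAt_vec₄ (hasDerivAt_const v 0) (hasDerivAt_deriv_of_contDiffAt_two hq)
      (hasDerivAt_const v 1) (hasDerivAt_deriv_of_contDiffAt_two hg)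
  have hsymm := structureMatrix_isSymm b⁻¹
  have hiso : ∀ᶠ t in 𝓝 v, stateVector b t (g t) ⬝ᵥ
      structureMatrix b⁻¹ *ᵥ stateVector b t (g t) = 0 :=
    .of_forall fun t => stateVector_isotropic b t (g t)
  have hVT : V ⬝ᵥ structureMatrix b⁻¹ *ᵥ T = 0 := by
    rw [mulVec_smul, dotProduct_smul, stateVector_orthogonal_vertical, smul_zero]
  have hT₀ : T 0 = 0 := mul_zero s
  have hT₂ : T 2 = 0 := mul_zero s
  rw [show 𝕊⁻¹ = structureMatrix b⁻¹ from structureMatrix_inv hb]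
  exact ⟨stateVector_isotropic b v (g v),
    isotropic_dotProduct_mulVec_velocity hsymm hVW.self_of_nhds hiso, hVT,
    isotropic_dotProduct_mulVec_acceleration hsymm hVW hWZ hiso,
    dotProduct_structureMatrix_mulVec_eq_zero _ hT₀ hT₂ hT₀ hT₂,
    dotProduct_structureMatrix_mulVec_eq_zero _ hT₀ hT₂ rfl rfl,
    (structureMatrix_mulVec_neg_e₁ _).symm,
    e₀_dotProduct V, e₀_dotProduct W, e₀_dotProduct Z, (e₀_dotProduct T).trans hT₀⟩

/-- key algebraic cancellations (Proposition 4, case `N = 2`) for the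
vectors `V, W, Z, T, E, F` built from `g(v) = −((c/b) v + l₂)/τ(v)`,
`q(v) = v g(v)/b`, and the matrix `𝕊 = [[0,−1,0,0],[−1,0,0,0],[0,0,0,b],[0,0,b,0]]`. -/
theorem stmt11 (b c l₂ : ℝ) (hb : b ≠ 0) (I : Set ℝ) (hI : IsOpen I)
    (hconn : I.OrdConnected) (τ : ℝ → ℝ) (hτ : ContDiffOn ℝ (⊤ : ℕ∞) τ I)
    (hτpos : ∀ x ∈ I, 0 < τ x) :
    let g : ℝ → ℝ := fun v => -((c / b) * v + l₂) / τ v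
    let q : ℝ → ℝ := fun v => v * g v / b
    let 𝕊 : Matrix (Fin 4) (Fin 4) ℝ := !![0,-1,0,0; -1,0,0,0; 0,0,0,b; 0,0,b,0]
    ∀ v ∈ I,
      let V : Fin 4 → ℝ := ![1, q v, v, g v]
      let W : Fin 4 → ℝ := ![0, deriv q v, 1, deriv g v]
      let Z : Fin 4 → ℝ := ![0, deriv (deriv q) v, 0, deriv (deriv g) v]
      let T : Fin 4 → ℝ := (1 / Real.sqrt (τ v)) • ![0, v / b, 0, 1]
      let Evec : Fin 4 → ℝ := ![1, 0, 0, 0]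
      let F : Fin 4 → ℝ := ![0, -1, 0, 0]
      V ⬝ᵥ 𝕊⁻¹.mulVec V = 0 ∧
      V ⬝ᵥ 𝕊⁻¹.mulVec W = 0 ∧
      V ⬝ᵥ 𝕊⁻¹.mulVec T = 0 ∧
      V ⬝ᵥ 𝕊⁻¹.mulVec Z = -(W ⬝ᵥ 𝕊⁻¹.mulVec W) ∧
      T ⬝ᵥ 𝕊⁻¹.mulVec T = 0 ∧
      T ⬝ᵥ 𝕊⁻¹.mulVec Z = 0 ∧
      Evec = 𝕊⁻¹.mulVec F ∧
      Evec ⬝ᵥ V = 1 ∧ Evec ⬝ᵥ W = 0 ∧ Evec ⬝ᵥ Z = 0 ∧ Evec ⬝ᵥ T = 0 := by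
  intro g _ _ v hv
  have hτv : ContDiffAt ℝ 2 τ v :=
    (hτ.contDiffAt (hI.mem_nhds hv)).of_le ENat.LEInfty.out
  have hg : ContDiffAt ℝ 2 g v := ContDiffAt.div (by fun_prop) hτv (hτpos v hv).ne'
  exact stmt11_general hb hg _
end

section
/- Fix real numbers b ≠ 0, c, λ₂, a smooth function τ > 0 on an open interval I, and define g, q, and the vectors V, W, Z, T, F and the matrix 𝕊 as in the N = 2 setting. For v ∈ I set σ := 1/(b√τ(v)), w := 2 g'(v)/b, ζ := g''(v)/b, and let ℙ be the 4×4 matrix whose columns are 𝕊⁻¹F, 𝕊⁻¹V, 𝕊⁻¹T, 𝕊⁻¹W. Then ℙᵀ 𝕊 ℙ = [[0,1,0,0],[1,0,0,0],[0,0,0,σ],[0,0,σ,w]], and for all real numbers a, β, m, γ, n one has ℙᵀ ( a V⊗V + β (V⊗W + W⊗V) + m W⊗W + γ (V⊗Z + Z⊗V) + n T⊗T ) ℙ = [[a, −γ w, β σ, β w + γ ζ],[−γ w, 0, 0, 0],[β σ, 0, m σ², m σ w],[β w + γ ζ, 0, m σ w, m w² + n σ²]], where X⊗Y denotes the rank-one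 matrix X Yᵀ. -/
open Matrix

/-!
For `S` symmetric and invertible and vectors `Xⱼ`, let `P` be the matrix with columns `S⁻¹ Xⱼ`.
Then `S P` has columns `Xⱼ`, so `Pᵀ S P` has columns `Pᵀ Xⱼ`, while
`Pᵀ (X ⊗ Y) P = Pᵀ X ⊗ Pᵀ Y`. Both conjugation formulas therefore reduce to the five vectors
`Pᵀ F, Pᵀ V, Pᵀ T, Pᵀ W, Pᵀ Z`, whose entries are values of the symmetric form
`⟨X, Y⟩ = (S⁻¹ X) ⬝ Y`.

The curve `V` is null for this form because `q = v g / b`. Differentiating `⟨V, V⟩ = 0` twice, with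
`W = V'` and `Z = V''`, gives `⟨V, W⟩ = 0` and `⟨V, Z⟩ = -⟨W, W⟩`: this is the source of the
entries `-γ w`.
-/

namespace StructuralConjugation

section Congruence

variable {R m n : Type*} [CommRing R] [Fintype m]

theorem transpose_mul_vecMulVec_mul (P : Matrix m n R) (X Y : m → R) :
    Pᵀ * vecMulVec X Y * P = vecMulVec (Pᵀ *ᵥ X) (Pᵀ *ᵥ Y) := by
  rw [mul_vecMulVec, vecMulVec_mul, mulVec_transpose P Y]

theorem transpose_mul_rankOne_combination_mul
    {P : Matrix m (Fin 4) R} {V W Z T : m → R} {σ w ζ : R}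
    (hV : Pᵀ *ᵥ V = ![1, 0, 0, 0]) (hW : Pᵀ *ᵥ W = ![0, 0, σ, w])
    (hZ : Pᵀ *ᵥ Z = ![0, -w, 0, ζ]) (hT : Pᵀ *ᵥ T = ![0, 0, 0, σ]) (a β μ γ ν : R) :
    Pᵀ * (a • vecMulVec V V
          + β • (vecMulVec V W + vecMulVec W V)
          + μ • vecMulVec W W
          + γ • (vecMulVec V Z + vecMulVec Z V)
          + ν • vecMulVec T T) * P
      = !![a, -(γ*w), β*σ, β*w + γ*ζ;
           -(γ*w), 0, 0, 0;
           β*σ, 0, μ*σ^2, μ*σ*w;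
           β*w + γ*ζ, 0, μ*σ*w, μ*w^2 + ν*σ^2] := by
  simp only [Matrix.mul_add, Matrix.add_mul, Matrix.mul_smul, Matrix.smul_mul,
    transpose_mul_vecMulVec_mul, hV, hW, hZ, hT]
  ext i j
  fin_cases i <;> fin_cases j <;> simp <;> ring

variable [DecidableEq m]

/-- The matrix whose columns are `S⁻¹ Xⱼ`. Its transpose sends a vector `Y` to its pairings with
the `Xⱼ` under the form `⟨X, Y⟩ = (S⁻¹ X) ⬝ Y`. -/
noncomputable def dualFrame (S : Matrix m m R) (X : n → m → R) : Matrix m n R :=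
  of fun i j => (S⁻¹ *ᵥ X j) i

theorem transpose_dualFrame_mulVec (S : Matrix m m R) (X : n → m → R) (Y : m → R) :
    (dualFrame S X)ᵀ *ᵥ Y = fun j => (S⁻¹ *ᵥ X j) ⬝ᵥ Y :=
  rfl

theorem mul_dualFrame {S : Matrix m m R} (hS : IsUnit S.det) (X : n → m → R) :
    S * dualFrame S X = of fun i j => X j i := by
  ext i j
  calc (S * dualFrame S X) i j = (S *ᵥ (S⁻¹ *ᵥ X j)) i := rfl
    _ = X j i := by rw [mulVec_mulVec, mul_nonsing_inv S hS, one_mulVec]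

theorem transpose_dualFrame_mul_mul_dualFrame {S : Matrix m m R} (hS : IsUnit S.det)
    (X : n → m → R) :
    (dualFrame S X)ᵀ * S * dualFrame S X = of fun i j => ((dualFrame S X)ᵀ *ᵥ X j) i := by
  rw [Matrix.mul_assoc, mul_dualFrame hS]
  rfl

end Congruence

section AdaptedFrame

variable {K : Type*} [Field K] {b : K}

/-- The matrix `𝕊`, whose inverse defines the form on `K⁴` for which the curve `V` is null. -/
def structureMatrix (b : K) : Matrix (Fin 4) (Fin 4) K :=
  !![0,-1,0,0; -1,0,0,0; 0,0,0,b; 0,0,b,0]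

theorem structureMatrix_mul_structureMatrix_inv (hb : b ≠ 0) :
    structureMatrix b * structureMatrix b⁻¹ = 1 := by
  ext i j
  fin_cases i <;> fin_cases j <;> simp [structureMatrix, hb]

theorem isUnit_det_structureMatrix (hb : b ≠ 0) : IsUnit (structureMatrix b).det :=
  isUnit_det_of_right_inverse (structureMatrix_mul_structureMatrix_inv hb)

theorem inv_structureMatrix_mulVec (hb : b ≠ 0) (x : Fin 4 → K) :
    (structureMatrix b)⁻¹ *ᵥ x = ![-x 1, -x 0, b⁻¹ * x 3, b⁻¹ * x 2] := by
  rw [inv_eq_right_inv (structureMatrix_mul_structureMatrix_inv hb)]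
  ext i
  fin_cases i <;> simp [structureMatrix, mulVec, dotProduct, Fin.sum_univ_four]

/-- The vector `F`, constant along the null curve and pairing to `1` with its points. -/
def fibre : Fin 4 → K := ![0, -1, 0, 0]

/-- The point `V` of the null curve, as a function of `v` and of the value `g₀` of `g` at `v`. -/
def curve (b v g₀ : K) : Fin 4 → K := ![1, v * g₀ / b, v, g₀]

/-- The velocity `W = V'` of the null curve, as a function of `v` and of the values `g₀`, `g₁` of
`g`, `g'` at `v`. -/
def velocity (b v g₀ g₁ : K) : Fin 4 → K := ![0, (g₀ + v * g₁) / b, 1, g₁]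

/-- The acceleration `Z = V''` of the null curve, as a function of `v` and of the values `g₁`, `g₂`
of `g'`, `g''` at `v`. -/
def acceleration (b v g₁ g₂ : K) : Fin 4 → K := ![0, (2 * g₁ + v * g₂) / b, 0, g₂]

/-- The vector `T`, a null vector orthogonal to `F` and `V`, with an arbitrary scalar `ρ` in place
of `1/√τ(v)`. -/
def transverse (b v ρ : K) : Fin 4 → K := ρ • ![0, v / b, 0, 1]

/-- The matrix `ℙ` by which the conjugation is made, with `g₀`, `g₁`, `ρ` as in `velocity` and
`transverse`. -/
noncomputable def adaptedFrame (b v g₀ g₁ ρ : K) : Matrix (Fin 4) (Fin 4) K :=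
  dualFrame (structureMatrix b) ![fibre, curve b v g₀, transverse b v ρ, velocity b v g₀ g₁]

theorem transpose_adaptedFrame_mulVec (hb : b ≠ 0) (v g₀ g₁ ρ : K) (x : Fin 4 → K) :
    (adaptedFrame b v g₀ g₁ ρ)ᵀ *ᵥ x =
      ![x 0,
        -(v * g₀ / b) * x 0 - x 1 + b⁻¹ * g₀ * x 2 + b⁻¹ * v * x 3,
        b⁻¹ * ρ * x 2 - ρ * (v / b) * x 0,
        -((g₀ + v * g₁) / b) * x 0 + b⁻¹ * g₁ * x 2 + b⁻¹ * x 3] := by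
  simp only [adaptedFrame, transpose_dualFrame_mulVec, inv_structureMatrix_mulVec hb]
  ext i
  fin_cases i <;>
    simp [fibre, curve, transverse, velocity, dotProduct, Fin.sum_univ_four] <;> ring

theorem transpose_adaptedFrame_mulVec_fibre (hb : b ≠ 0) (v g₀ g₁ ρ : K) :
    (adaptedFrame b v g₀ g₁ ρ)ᵀ *ᵥ fibre = ![0, 1, 0, 0] := by
  simp [transpose_adaptedFrame_mulVec hb, fibre]

theorem transpose_adaptedFrame_mulVec_curve (hb : b ≠ 0) (v g₀ g₁ ρ : K) :
    (adaptedFrame b v g₀ g₁ ρ)ᵀ *ᵥ curve b v g₀ = ![1, 0, 0, 0] := by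
  rw [transpose_adaptedFrame_mulVec hb]
  ext i
  fin_cases i <;> simp [curve] <;> ring

theorem transpose_adaptedFrame_mulVec_transverse (hb : b ≠ 0) (v g₀ g₁ ρ : K) :
    (adaptedFrame b v g₀ g₁ ρ)ᵀ *ᵥ transverse b v ρ = ![0, 0, 0, ρ / b] := by
  rw [transpose_adaptedFrame_mulVec hb]
  ext i
  fin_cases i <;> simp [transverse] <;> ring

theorem transpose_adaptedFrame_mulVec_velocity (hb : b ≠ 0) (v g₀ g₁ ρ : K) :
    (adaptedFrame b v g₀ g₁ ρ)ᵀ *ᵥ velocity b v g₀ g₁ = ![0, 0, ρ / b, 2 * g₁ / b] := by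
  rw [transpose_adaptedFrame_mulVec hb]
  ext i
  fin_cases i <;> simp [velocity] <;> ring

theorem transpose_adaptedFrame_mulVec_acceleration (hb : b ≠ 0) (v g₀ g₁ g₂ ρ : K) :
    (adaptedFrame b v g₀ g₁ ρ)ᵀ *ᵥ acceleration b v g₁ g₂ = ![0, -(2 * g₁ / b), 0, g₂ / b] := by
  rw [transpose_adaptedFrame_mulVec hb]
  ext i
  fin_cases i <;> simp [acceleration] <;> ring

theorem transpose_adaptedFrame_mul_structureMatrix_mul (hb : b ≠ 0) (v g₀ g₁ ρ : K) :
    (adaptedFrame b v g₀ g₁ ρ)ᵀ * structureMatrix b * adaptedFrame b v g₀ g₁ ρ =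
      !![0,1,0,0; 1,0,0,0; 0,0,0,ρ / b; 0,0,ρ / b,2 * g₁ / b] := by
  rw [adaptedFrame, transpose_dualFrame_mul_mul_dualFrame (isUnit_det_structureMatrix hb),
    ← adaptedFrame]
  ext i j
  fin_cases i <;> fin_cases j <;>
    simp [transpose_adaptedFrame_mulVec_fibre hb, transpose_adaptedFrame_mulVec_curve hb,
      transpose_adaptedFrame_mulVec_transverse hb, transpose_adaptedFrame_mulVec_velocity hb]

end AdaptedFrame

section Derivatives

variable {𝕜 : Type*} [NontriviallyNormedField 𝕜] {g : 𝕜 → 𝕜} {v : 𝕜}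

theorem deriv_id_mul_div_const (hg : DifferentiableAt 𝕜 g v) (b : 𝕜) :
    deriv (fun x => x * g x / b) v = (g v + v * deriv g v) / b := by
  simpa only [id, one_mul] using! (((hasDerivAt_id v).mul hg.hasDerivAt).div_const b).deriv

theorem deriv_deriv_id_mul_div_const (hg : ∀ᶠ x in nhds v, DifferentiableAt 𝕜 g x)
    (hg' : DifferentiableAt 𝕜 (deriv g) v) (b : 𝕜) :
    deriv (deriv fun x => x * g x / b) v = (2 * deriv g v + v * deriv (deriv g) v) / b := by
  have hq : deriv (fun x => x * g x / b) =ᶠ[nhds v] fun x => (g x + x * deriv g x) / b :=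
    hg.mono fun x hx => deriv_id_mul_div_const hx b
  have hsum := (hg.self_of_nhds.hasDerivAt.add
    ((hasDerivAt_id v).mul hg'.hasDerivAt)).div_const b
  calc deriv (deriv fun x => x * g x / b) v
      = (deriv g v + (1 * deriv g v + v * deriv (deriv g) v)) / b := hq.deriv_eq.trans hsum.deriv
    _ = (2 * deriv g v + v * deriv (deriv g) v) / b := by ring

theorem contDiffAt_neg_affine_div {τ : 𝕜 → 𝕜} {k : WithTop ℕ∞} (hτ : ContDiffAt 𝕜 k τ v)
    (hτv : τ v ≠ 0) (r s : 𝕜) : ContDiffAt 𝕜 k (fun x => -(r * x + s) / τ x) v := by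
  fun_prop (disch := assumption)

end Derivatives

end StructuralConjugation

open StructuralConjugation in
theorem stmt12_general {𝕜 : Type*} [NontriviallyNormedField 𝕜] {b : 𝕜} (hb : b ≠ 0)
    {g : 𝕜 → 𝕜} {v : 𝕜} (hg : ContDiffAt 𝕜 2 g v) (ρ : 𝕜) :
    let q : 𝕜 → 𝕜 := fun v => v * g v / b
    let 𝕊 : Matrix (Fin 4) (Fin 4) 𝕜 := !![0,-1,0,0; -1,0,0,0; 0,0,0,b; 0,0,b,0]
    let V : Fin 4 → 𝕜 := ![1, q v, v, g v]
    let W : Fin 4 → 𝕜 := ![0, deriv q v, 1, deriv g v]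
    let Z : Fin 4 → 𝕜 := ![0, deriv (deriv q) v, 0, deriv (deriv g) v]
    let T : Fin 4 → 𝕜 := ρ • ![0, v / b, 0, 1]
    let F : Fin 4 → 𝕜 := ![0, -1, 0, 0]
    let σ : 𝕜 := ρ / b
    let w : 𝕜 := 2 * deriv g v / b
    let ζ : 𝕜 := deriv (deriv g) v / b
    let ℙ : Matrix (Fin 4) (Fin 4) 𝕜 :=
      Matrix.of fun i j =>
        ![𝕊⁻¹.mulVec F, 𝕊⁻¹.mulVec V, 𝕊⁻¹.mulVec T, 𝕊⁻¹.mulVec W] j i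
    ℙᵀ * 𝕊 * ℙ = !![0,1,0,0; 1,0,0,0; 0,0,0,σ; 0,0,σ,w] ∧
    ∀ a β m γ n : 𝕜,
      ℙᵀ * (a • vecMulVec V V
            + β • (vecMulVec V W + vecMulVec W V)
            + m • vecMulVec W W
            + γ • (vecMulVec V Z + vecMulVec Z V)
            + n • vecMulVec T T) * ℙ
        = !![a, -(γ*w), β*σ, β*w + γ*ζ;
             -(γ*w), 0, 0, 0;
             β*σ, 0, m*σ^2, m*σ*w;
             β*w + γ*ζ, 0, m*σ*w, m*w^2 + n*σ^2] := by
  intro q 𝕊 V W Z T F σ w ζ ℙ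
  have hdg : ∀ᶠ x in nhds v, DifferentiableAt 𝕜 g x :=
    (hg.eventually (by simp)).mono fun x hx => hx.differentiableAt two_ne_zero
  have hdg' : DifferentiableAt 𝕜 (deriv g) v :=
    (hg.derivWithin (m := 1) one_add_one_eq_two.le).differentiableAt one_ne_zero
  have hW : W = velocity b v (g v) (deriv g v) := by
    simp only [W, q, velocity, deriv_id_mul_div_const hdg.self_of_nhds]
  have hZ : Z = acceleration b v (deriv g v) (deriv (deriv g) v) := by
    simp only [Z, q, acceleration, deriv_deriv_id_mul_div_const hdg hdg']
  have hℙ : ℙ = adaptedFrame b v (g v) (deriv g v) ρ := by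
    ext i j
    simp only [ℙ, hW]
    fin_cases j <;> rfl
  rw [hℙ, hW, hZ]
  exact ⟨transpose_adaptedFrame_mul_structureMatrix_mul hb _ _ _ _,
    transpose_mul_rankOne_combination_mul
      (transpose_adaptedFrame_mulVec_curve hb _ _ _ _)
      (transpose_adaptedFrame_mulVec_velocity hb _ _ _ _)
      (transpose_adaptedFrame_mulVec_acceleration hb _ _ _ _ _)
      (transpose_adaptedFrame_mulVec_transverse hb _ _ _ _)⟩

/-- structural conjugation formula (Corollary 3, case `N = 2`). With
`ℙ` the matrix whose columns are `𝕊⁻¹F, 𝕊⁻¹V, 𝕊⁻¹T, 𝕊⁻¹W`, one has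
`ℙᵀ 𝕊 ℙ = [[0,1,0,0],[1,0,0,0],[0,0,0,σ],[0,0,σ,w]]` and the displayed formula for
`ℙᵀ (a V⊗V + β(V⊗W+W⊗V) + m W⊗W + γ(V⊗Z+Z⊗V) + n T⊗T) ℙ`. -/
theorem stmt12 (b c l₂ : ℝ) (hb : b ≠ 0) (I : Set ℝ) (hI : IsOpen I)
    (hconn : I.OrdConnected) (τ : ℝ → ℝ) (hτ : ContDiffOn ℝ (⊤ : ℕ∞) τ I)
    (hτpos : ∀ x ∈ I, 0 < τ x) :
    let g : ℝ → ℝ := fun v => -((c / b) * v + l₂) / τ v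
    let q : ℝ → ℝ := fun v => v * g v / b
    let 𝕊 : Matrix (Fin 4) (Fin 4) ℝ := !![0,-1,0,0; -1,0,0,0; 0,0,0,b; 0,0,b,0]
    ∀ v ∈ I,
      let V : Fin 4 → ℝ := ![1, q v, v, g v]
      let W : Fin 4 → ℝ := ![0, deriv q v, 1, deriv g v]
      let Z : Fin 4 → ℝ := ![0, deriv (deriv q) v, 0, deriv (deriv g) v]
      let T : Fin 4 → ℝ := (1 / Real.sqrt (τ v)) • ![0, v / b, 0, 1]
      let F : Fin 4 → ℝ := ![0, -1, 0, 0]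
      let σ : ℝ := 1 / (b * Real.sqrt (τ v))
      let w : ℝ := 2 * deriv g v / b
      let ζ : ℝ := deriv (deriv g) v / b
      let ℙ : Matrix (Fin 4) (Fin 4) ℝ :=
        Matrix.of fun i j =>
          ![𝕊⁻¹.mulVec F, 𝕊⁻¹.mulVec V, 𝕊⁻¹.mulVec T, 𝕊⁻¹.mulVec W] j i
      ℙᵀ * 𝕊 * ℙ = !![0,1,0,0; 1,0,0,0; 0,0,0,σ; 0,0,σ,w] ∧
      ∀ a β m γ n : ℝ,
        ℙᵀ * (a • vecMulVec V V
              + β • (vecMulVec V W + vecMulVec W V)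
              + m • vecMulVec W W
              + γ • (vecMulVec V Z + vecMulVec Z V)
              + n • vecMulVec T T) * ℙ
          = !![a, -(γ*w), β*σ, β*w + γ*ζ;
               -(γ*w), 0, 0, 0;
               β*σ, 0, m*σ^2, m*σ*w;
               β*w + γ*ζ, 0, m*σ*w, m*w^2 + n*σ^2] := by
  intro g q 𝕊 v hv
  have hg : ContDiffAt ℝ 2 g v := StructuralConjugation.contDiffAt_neg_affine_div
    ((hτ.contDiffAt (hI.mem_nhds hv)).of_le (by norm_cast)) (hτpos v hv).ne' (c / b) l₂
  simpa only [div_mul_eq_div_div_swap] using stmt12_general hb hg (1 / Real.sqrt (τ v))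
end

section
/- Let N ≥ 1, let v, a ∈ ℝ, let l₀, r₀ ∈ ℝ^N, and let M be a real N×N matrix such that v is not an eigenvalue of M. Set l := (Mᵀ − v I_N)⁻¹ l₀ and r := −(M − v I_N)⁻¹ r₀, and let P be the (N+2)×(N+2) matrix [[1, 0, lᵀ],[0, 1, 0],[0, r, I_N]]. Then P is invertible and P⁻¹ · [[v, a, l₀ᵀ],[0, v, 0],[0, r₀, M]] · P = [[v, a − l₀ᵀ (M − v I_N)⁻¹ r₀, 0],[0, v, 0],[0, 0, M]]. -/
open Matrix

noncomputable section

/-- The block matrix `[[v, a, l₀ᵀ],[0, v, 0],[0, r₀, M]]`. -/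
def Tmat (N : ℕ) (v a : ℝ) (l₀ r₀ : Fin N → ℝ) (M : Matrix (Fin N) (Fin N) ℝ) :
    Matrix (Idx N) (Idx N) ℝ :=
  Matrix.of fun i j =>
    match i, j with
    | Sum.inl _, Sum.inl _ => v
    | Sum.inl _, Sum.inr (Sum.inl _) => a
    | Sum.inl _, Sum.inr (Sum.inr j') => l₀ j'
    | Sum.inr (Sum.inl _), Sum.inr (Sum.inl _) => v
    | Sum.inr (Sum.inr i'), Sum.inr (Sum.inl _) => r₀ i'
    | Sum.inr (Sum.inr i'), Sum.inr (Sum.inr j') => M i' j'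
    | _, _ => 0

/-- The change-of-basis matrix `[[1, 0, lᵀ],[0, 1, 0],[0, r, I_N]]`. -/
def Pmat (N : ℕ) (l r : Fin N → ℝ) : Matrix (Idx N) (Idx N) ℝ :=
  Matrix.of fun i j =>
    match i, j with
    | Sum.inl _, Sum.inl _ => 1
    | Sum.inl _, Sum.inr (Sum.inr j') => l j'
    | Sum.inr (Sum.inl _), Sum.inr (Sum.inl _) => 1
    | Sum.inr (Sum.inr i'), Sum.inr (Sum.inl _) => r i'
    | Sum.inr (Sum.inr i'), Sum.inr (Sum.inr j') => if i' = j' then 1 else 0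
    | _, _ => 0

/-- The block-diagonalized matrix
`[[v, a − l₀ᵀ(M − v I)⁻¹ r₀, 0],[0, v, 0],[0, 0, M]]`. -/
def Dmat (N : ℕ) (v a : ℝ) (l₀ r₀ : Fin N → ℝ) (M : Matrix (Fin N) (Fin N) ℝ) :
    Matrix (Idx N) (Idx N) ℝ :=
  Matrix.of fun i j =>
    match i, j with
    | Sum.inl _, Sum.inl _ => v
    | Sum.inl _, Sum.inr (Sum.inl _) =>
        a - l₀ ⬝ᵥ (M - v • (1 : Matrix (Fin N) (Fin N) ℝ))⁻¹.mulVec r₀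
    | Sum.inr (Sum.inl _), Sum.inr (Sum.inl _) => v
    | Sum.inr (Sum.inr i'), Sum.inr (Sum.inr j') => M i' j'
    | _, _ => 0

end

/-!
The matrices with block pattern `[[*, *, *], [0, *, 0], [0, *, *]]` are closed under products. In
this pattern, conjugation by `P = [[1, 0, X], [0, 1, 0], [0, Y, 1]]` removes the off-diagonal blocks
`L` and `R` of `[[A, B, L], [0, D, 0], [0, R, M]]` exactly when `X` and `Y` solve the Sylvester
equations `A * X + L = X * M` and `R + M * Y = Y * D`. When `A = v • 1` and `D = w • 1`, these are
solved by `X = L * (M - v • 1)⁻¹` and `Y = -((M - w • 1)⁻¹ * R)`.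
-/

section BorderedBlocks

variable {α m n p : Type*}

/-- The block matrix `[[A, B, L], [0, D, 0], [0, R, M]]`, the common shape of the matrix to be
reduced, of the change of basis and its inverse, and of the reduced matrix. -/
def borderedBlocks [Zero α] (A : Matrix m m α) (B : Matrix m p α) (L : Matrix m n α)
    (D : Matrix p p α) (R : Matrix n p α) (M : Matrix n n α) :
    Matrix (m ⊕ p ⊕ n) (m ⊕ p ⊕ n) α :=
  fromBlocks A (fromCols B L) 0 (fromBlocks D 0 R M)

theorem borderedBlocks_mul [Semiring α] [Fintype m] [Fintype n] [Fintype p]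
    (A A' : Matrix m m α) (B B' : Matrix m p α) (L L' : Matrix m n α)
    (D D' : Matrix p p α) (R R' : Matrix n p α) (M M' : Matrix n n α) :
    borderedBlocks A B L D R M * borderedBlocks A' B' L' D' R' M' =
      borderedBlocks (A * A') (A * B' + (B * D' + L * R')) (A * L' + L * M')
        (D * D') (R * D' + M * R') (M * M') := by
  have fromCols_add (U U' : Matrix m p α) (V V' : Matrix m n α) :
      fromCols U V + fromCols U' V' = fromCols (U + U') (V + V') := by
    ext i (j | j) <;> rfl
  simp only [borderedBlocks, fromBlocks_multiply, mul_fromCols, fromCols_mul_fromBlocks,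
    fromCols_add, Matrix.mul_zero, Matrix.zero_mul, add_zero, zero_add]

theorem borderedBlocks_one [Semiring α] [DecidableEq m] [DecidableEq n] [DecidableEq p] :
    borderedBlocks (1 : Matrix m m α) 0 0 (1 : Matrix p p α) 0 (1 : Matrix n n α) = 1 := by
  simp only [borderedBlocks, fromCols_zero, fromBlocks_one]

/-- The change of basis `[[1, 0, X], [0, 1, 0], [0, Y, 1]]`, by which a matrix of the form
`borderedBlocks` is conjugated to decouple the block `M`. -/
def shearBlocks [Zero α] [One α] [DecidableEq m] [DecidableEq n] [DecidableEq p]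
    (X : Matrix m n α) (Y : Matrix n p α) : Matrix (m ⊕ p ⊕ n) (m ⊕ p ⊕ n) α :=
  borderedBlocks 1 0 X 1 Y 1

variable [Fintype m] [Fintype n] [Fintype p] [DecidableEq m] [DecidableEq n] [DecidableEq p]

theorem shearBlocks_mul_borderedBlocks_neg [Ring α] (X : Matrix m n α) (Y : Matrix n p α) :
    shearBlocks X Y * borderedBlocks 1 (X * Y) (-X) 1 (-Y) 1 = 1 := by
  simp [shearBlocks, borderedBlocks_mul, borderedBlocks_one]

theorem borderedBlocks_mul_shearBlocks [Semiring α]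
    {A : Matrix m m α} (B : Matrix m p α) {L : Matrix m n α} {D : Matrix p p α}
    {R : Matrix n p α} {M : Matrix n n α} {X : Matrix m n α} {Y : Matrix n p α}
    (hX : A * X + L = X * M) (hY : R + M * Y = Y * D) :
    borderedBlocks A B L D R M * shearBlocks X Y =
      shearBlocks X Y * borderedBlocks A (B + L * Y) 0 D 0 M := by
  simp [shearBlocks, borderedBlocks_mul, hX, hY]

variable [CommRing α]

theorem isUnit_det_shearBlocks (X : Matrix m n α) (Y : Matrix n p α) :
    IsUnit (shearBlocks X Y).det :=
  isUnit_det_of_right_inverse (shearBlocks_mul_borderedBlocks_neg X Y)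

theorem smul_one_mul_mul_inv_add {v : α} {M : Matrix n n α}
    (hv : IsUnit (M - v • (1 : Matrix n n α)).det) (L : Matrix m n α) :
    (v • (1 : Matrix m m α)) * (L * (M - v • (1 : Matrix n n α))⁻¹) + L =
      L * (M - v • (1 : Matrix n n α))⁻¹ * M := by
  have h := nonsing_inv_mul_cancel_right _ L hv
  rw [Matrix.mul_sub, Matrix.mul_smul, Matrix.mul_one, sub_eq_iff_eq_add'] at h
  rw [Matrix.smul_mul, Matrix.one_mul, h]

theorem add_mul_neg_inv_mul {w : α} {M : Matrix n n α}
    (hw : IsUnit (M - w • (1 : Matrix n n α)).det) (R : Matrix n p α) :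
    R + M * -((M - w • (1 : Matrix n n α))⁻¹ * R) =
      -((M - w • (1 : Matrix n n α))⁻¹ * R) * (w • (1 : Matrix p p α)) := by
  have h := mul_nonsing_inv_cancel_left _ R hw
  rw [Matrix.sub_mul, Matrix.smul_mul, Matrix.one_mul, sub_eq_iff_eq_add] at h
  rw [Matrix.mul_smul, Matrix.mul_one, Matrix.mul_neg, h, smul_neg]
  abel

theorem stmt14_general (v w : α) (B : Matrix m p α) (L : Matrix m n α) (R : Matrix n p α)
    (M : Matrix n n α) (hv : IsUnit (M - v • (1 : Matrix n n α)).det)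
    (hw : IsUnit (M - w • (1 : Matrix n n α)).det) :
    IsUnit (shearBlocks (L * (M - v • (1 : Matrix n n α))⁻¹)
        (-((M - w • (1 : Matrix n n α))⁻¹ * R))).det ∧
    (shearBlocks (L * (M - v • (1 : Matrix n n α))⁻¹)
        (-((M - w • (1 : Matrix n n α))⁻¹ * R)))⁻¹
      * borderedBlocks (v • 1) B L (w • 1) R M
      * shearBlocks (L * (M - v • (1 : Matrix n n α))⁻¹)
          (-((M - w • (1 : Matrix n n α))⁻¹ * R))
      = borderedBlocks (v • 1) (B - L * ((M - w • (1 : Matrix n n α))⁻¹ * R)) 0 (w • 1) 0 M := by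
  refine ⟨isUnit_det_shearBlocks _ _, ?_⟩
  rw [Matrix.mul_assoc, borderedBlocks_mul_shearBlocks B
      (smul_one_mul_mul_inv_add hv L) (add_mul_neg_inv_mul hw R),
    nonsing_inv_mul_cancel_left _ _ (isUnit_det_shearBlocks _ _), Matrix.mul_neg, ← sub_eq_add_neg]

end BorderedBlocks

theorem Tmat_eq_borderedBlocks (N : ℕ) (v a : ℝ) (l₀ r₀ : Fin N → ℝ)
    (M : Matrix (Fin N) (Fin N) ℝ) :
    Tmat N v a l₀ r₀ M =
      borderedBlocks (v • 1) (a • 1) (replicateRow (Fin 1) l₀) (v • 1)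
        (replicateCol (Fin 1) r₀) M := by
  ext (i | i | i) (j | j | j) <;>
    simp [Tmat, borderedBlocks, one_apply, eq_iff_true_of_subsingleton]

theorem Pmat_eq_shearBlocks (N : ℕ) (l r : Fin N → ℝ) :
    Pmat N l r = shearBlocks (replicateRow (Fin 1) l) (replicateCol (Fin 1) r) := by
  ext (i | i | i) (j | j | j) <;>
    simp [Pmat, shearBlocks, borderedBlocks, one_apply, eq_iff_true_of_subsingleton]

theorem Dmat_eq_borderedBlocks (N : ℕ) (v a : ℝ) (l₀ r₀ : Fin N → ℝ)
    (M : Matrix (Fin N) (Fin N) ℝ) :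
    Dmat N v a l₀ r₀ M =
      borderedBlocks (v • 1)
        (a • 1 - replicateRow (Fin 1) l₀ *
          ((M - v • (1 : Matrix (Fin N) (Fin N) ℝ))⁻¹ * replicateCol (Fin 1) r₀))
        0 (v • 1) 0 M := by
  rw [← replicateCol_mulVec]
  ext (i | i | i) (j | j | j) <;>
    simp [Dmat, borderedBlocks, one_apply, eq_iff_true_of_subsingleton]

theorem Pmat_mulVec_inv_eq_shearBlocks (N : ℕ) (v : ℝ) (l₀ r₀ : Fin N → ℝ)
    (M : Matrix (Fin N) (Fin N) ℝ) :
    Pmat N ((Mᵀ - v • (1 : Matrix (Fin N) (Fin N) ℝ))⁻¹.mulVec l₀)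
        (-((M - v • (1 : Matrix (Fin N) (Fin N) ℝ))⁻¹.mulVec r₀)) =
      shearBlocks
        (replicateRow (Fin 1) l₀ * (M - v • (1 : Matrix (Fin N) (Fin N) ℝ))⁻¹)
        (-((M - v • (1 : Matrix (Fin N) (Fin N) ℝ))⁻¹ * replicateCol (Fin 1) r₀)) := by
  have inv_transpose_sub : (Mᵀ - v • (1 : Matrix (Fin N) (Fin N) ℝ))⁻¹ =
      (M - v • (1 : Matrix (Fin N) (Fin N) ℝ))⁻¹ᵀ := by
    rw [transpose_nonsing_inv, transpose_sub, transpose_smul, transpose_one]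
  rw [Pmat_eq_shearBlocks, inv_transpose_sub, mulVec_transpose, replicateRow_vecMul,
    ← replicateCol_mulVec]
  rfl

/-- Lemma 1 of the paper: if `v` is not an eigenvalue of `M`, then
with `l = (Mᵀ − v I)⁻¹ l₀`, `r = −(M − v I)⁻¹ r₀` and
`P = [[1,0,lᵀ],[0,1,0],[0,r,I_N]]`, the matrix `P` is invertible and
`P⁻¹ [[v,a,l₀ᵀ],[0,v,0],[0,r₀,M]] P = [[v, a − l₀ᵀ(M−vI)⁻¹r₀, 0],[0,v,0],[0,0,M]]`. -/
theorem stmt14 (N : ℕ) (hN : 1 ≤ N) (v a : ℝ) (l₀ r₀ : Fin N → ℝ)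
    (M : Matrix (Fin N) (Fin N) ℝ)
    (hv : (M - v • (1 : Matrix (Fin N) (Fin N) ℝ)).det ≠ 0) :
    IsUnit (Pmat N ((Mᵀ - v • (1 : Matrix (Fin N) (Fin N) ℝ))⁻¹.mulVec l₀)
        (-((M - v • (1 : Matrix (Fin N) (Fin N) ℝ))⁻¹.mulVec r₀))).det ∧
    (Pmat N ((Mᵀ - v • (1 : Matrix (Fin N) (Fin N) ℝ))⁻¹.mulVec l₀)
        (-((M - v • (1 : Matrix (Fin N) (Fin N) ℝ))⁻¹.mulVec r₀)))⁻¹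
      * Tmat N v a l₀ r₀ M
      * Pmat N ((Mᵀ - v • (1 : Matrix (Fin N) (Fin N) ℝ))⁻¹.mulVec l₀)
          (-((M - v • (1 : Matrix (Fin N) (Fin N) ℝ))⁻¹.mulVec r₀))
      = Dmat N v a l₀ r₀ M := by
  rw [Pmat_mulVec_inv_eq_shearBlocks, Tmat_eq_borderedBlocks, Dmat_eq_borderedBlocks]
  exact stmt14_general v v _ _ _ M hv.isUnit hv.isUnit
end
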